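/- For x ∈ B_n one has the chain of inclusions RSSS(x) ⊆ USS(x) ⊆ SSS(x) ⊆ SS(x), and if x is cyclically weighted then RSSS(x) = USS(x). -/

import Mathlib

/-! Basic definitions for the braid group `B_n`, its Garside structure,
and related notions, following Garside/El-Rifai–Morton.
Generators are indexed by `i : Fin (n-1)`, with `σ i` corresponding to the
Artin generator `σ_{i+1}` (1-based) of the paper. -/

/-- The braid relations, as a set of elements of the free group. -/
def braidRels (n : ℕ) : Set (FreeGroup (Fin (n - 1))) :=
  { r | (∃ i j : Fin (n - 1), (i : ℕ) + 1 < (j : ℕ) ∧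
          r = .of i * .of j * (.of i)⁻¹ * (.of j)⁻¹) ∨
        (∃ i j : Fin (n - 1), (i : ℕ) + 1 = (j : ℕ) ∧
          r = (.of i * .of j * .of i) * (.of j * .of i * .of j)⁻¹) }

/-- The braid group on `n` strands. -/
abbrev BraidGroup (n : ℕ) := PresentedGroup (braidRels n)

namespace BraidGroup

variable {n : ℕ}

/-- The Artin generator `σ_{i+1}` (`i` is a 0-based index). -/
def σ (i : Fin (n - 1)) : BraidGroup n := PresentedGroup.of i

/-- `σ'` with a natural-number 0-based index (junk value `1` out of range). -/
def σ' (n : ℕ) (i : ℕ) : BraidGroup n := if h : i < n - 1 then σ ⟨i, h⟩ else 1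

/-- The fundamental braid `Δ = (σ_1⋯σ_{n-1})(σ_1⋯σ_{n-2})⋯(σ_1σ_2)σ_1`. -/
def Δ (n : ℕ) : BraidGroup n :=
  (((List.range (n - 1)).reverse).map
    (fun j => ((List.range (j + 1)).map (σ' n)).prod)).prod

/-- The monoid of positive braids inside `B_n` (the image of `B_n^+`). -/
def positives (n : ℕ) : Submonoid (BraidGroup n) :=
  Submonoid.closure (Set.range (σ (n := n)))

/-- `x` is a positive braid. -/
def IsPositive (x : BraidGroup n) : Prop := x ∈ positives n

/-- The prefix (left-divisibility) order: `x ≼ y` iff `x⁻¹y` is positive. -/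
def LeftDvd (x y : BraidGroup n) : Prop := ∃ p, IsPositive p ∧ x * p = y

/-- The right-divisibility order: `x ≼_R y` iff `y x⁻¹` is positive. -/
def RightDvd (x y : BraidGroup n) : Prop := ∃ p, IsPositive p ∧ p * x = y

/-- Permutation braids: positive left divisors of `Δ`. -/
def IsPermBraid (x : BraidGroup n) : Prop := IsPositive x ∧ LeftDvd x (Δ n)

/-- The involution `τ` of `B_n`, determined by `τ(σ_i) = σ_{n-i}`
(on 0-based indices: `i ↦ (n-2) - i`, i.e. `Fin.rev`). -/
noncomputable def τ (n : ℕ) : BraidGroup n →* BraidGroup n :=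
  Classical.epsilon (fun f => ∀ i : Fin (n - 1), f (σ i) = σ i.rev)

/-- `τ^u` for an integer `u`: equals `τ` for odd `u` and the identity for even `u`
(`τ` is an involution). -/
noncomputable def τpow (u : ℤ) (x : BraidGroup n) : BraidGroup n :=
  if Even u then x else τ n x

/-- The product `a⬝b` of a permutation braid `a` and a positive braid `b` is left
weighted iff `a* ∧ b = e`, i.e. no generator left-divides both `a* = a⁻¹Δ` and `b`. -/
def IsLeftWeighted (a b : BraidGroup n) : Prop :=
  ∀ i : Fin (n - 1), ¬ (LeftDvd (σ i) (a⁻¹ * Δ n) ∧ LeftDvd (σ i) b)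

/-- `Δ^u x_1 ⋯ x_k` is the left weighted form of `x`, where `L = [x_1, …, x_k]`. -/
def IsWeightedForm (u : ℤ) (L : List (BraidGroup n)) (x : BraidGroup n) : Prop :=
  (∀ a ∈ L, IsPermBraid a ∧ a ≠ 1 ∧ a ≠ Δ n) ∧
  L.Chain' IsLeftWeighted ∧
  x = (Δ n) ^ u * L.prod

/-- The left weighted form of a braid (chosen by choice; it exists and is unique). -/
noncomputable def wf (x : BraidGroup n) : ℤ × List (BraidGroup n) :=
  Classical.epsilon (fun p => IsWeightedForm p.1 p.2 x)

/-- The infimum `inf(x)`. -/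
noncomputable def binf (x : BraidGroup n) : ℤ := (wf x).1

/-- The canonical length `ℓ(x)`. -/
noncomputable def blen (x : BraidGroup n) : ℕ := (wf x).2.length

/-- The supremum `sup(x) = inf(x) + ℓ(x)`. -/
noncomputable def bsup (x : BraidGroup n) : ℤ := binf x + blen x

/-- The head `H(x)`: the first factor of the weighted form. -/
noncomputable def bhead (x : BraidGroup n) : BraidGroup n := ((wf x).2.head?).getD 1

/-- The tail `T(x)`: the last factor of the weighted form. -/
noncomputable def btail (x : BraidGroup n) : BraidGroup n := ((wf x).2.getLast?).getD 1

/-- Cycling: `c(x) = τ^u(H(x))⁻¹ · x · τ^u(H(x))`. -/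
noncomputable def cyc (x : BraidGroup n) : BraidGroup n :=
  (τpow (binf x) (bhead x))⁻¹ * x * τpow (binf x) (bhead x)

/-- Decycling: `d(x) = T(x) · x · T(x)⁻¹`. -/
noncomputable def decyc (x : BraidGroup n) : BraidGroup n :=
  btail x * x * (btail x)⁻¹

/-- `x` is cyclically weighted: `x_k ⬝ τ^u(x_1)` is left weighted. -/
noncomputable def IsCW (x : BraidGroup n) : Prop :=
  IsLeftWeighted (btail x) (τpow (binf x) (bhead x))

/-- `x` is weakly cyclically weighted: `H(x·τ^u(H(x))) = H(x)`. -/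
noncomputable def IsWCW (x : BraidGroup n) : Prop :=
  bhead (x * τpow (binf x) (bhead x)) = bhead x

/-- The summit set of `x`: conjugates with maximal infimum. -/
def SS (x : BraidGroup n) : Set (BraidGroup n) :=
  { y | IsConj x y ∧ ∀ z, IsConj x z → binf z ≤ binf y }

/-- The super summit set of `x`: conjugates with maximal infimum and minimal supremum. -/
def SSS (x : BraidGroup n) : Set (BraidGroup n) :=
  { y | y ∈ SS x ∧ ∀ z, IsConj x z → bsup y ≤ bsup z }

/-- The ultra summit set of `x`. -/
def USS (x : BraidGroup n) : Set (BraidGroup n) :=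
  { y ∈ SSS x | ∃ M : ℕ, 0 < M ∧ cyc^[M] y = y }

/-- The reduced super summit set of `x`. -/
def RSSS (x : BraidGroup n) : Set (BraidGroup n) :=
  { y | IsConj x y ∧ (∃ M : ℕ, 0 < M ∧ cyc^[M] y = y) ∧
        (∃ N : ℕ, 0 < N ∧ decyc^[N] y = y) }

/-- The left meet (greatest common left divisor) of two braids. -/
noncomputable def leftMeet (a b : BraidGroup n) : BraidGroup n :=
  Classical.epsilon (fun m => IsPositive m ∧ LeftDvd m a ∧ LeftDvd m b ∧
    ∀ c, IsPositive c → LeftDvd c a → LeftDvd c b → LeftDvd c m)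

/-- `x` is periodic: some positive power of `x` is a power of `Δ²`. -/
def IsPeriodic (x : BraidGroup n) : Prop :=
  ∃ m : ℕ, 0 < m ∧ ∃ k : ℤ, x ^ m = (Δ n) ^ (2 * k)

/-- The free generator `x_{i+1}` of `π₁` of the `n`-punctured disk (0-based index;
junk value `1` out of range). -/
def freeGen (n : ℕ) (i : ℕ) : FreeGroup (Fin n) := if h : i < n then .of ⟨i, h⟩ else 1

/-- The Artin action of `B_n` on the free group `F_n`:
`σ_i` sends `x_i ↦ x_i x_{i+1} x_i⁻¹`, `x_{i+1} ↦ x_i`, fixing the other generators. -/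
noncomputable def artin (n : ℕ) : BraidGroup n →* Monoid.End (FreeGroup (Fin n)) :=
  Classical.epsilon (fun f => ∀ i : Fin (n - 1),
    f (σ i) = FreeGroup.lift (fun j : Fin n =>
      if (j : ℕ) = (i : ℕ) then freeGen n i * freeGen n (i + 1) * (freeGen n i)⁻¹
      else if (j : ℕ) = (i : ℕ) + 1 then freeGen n i
      else FreeGroup.of j))

/-- The element of `π₁` represented by the round curve enclosing punctures
`I.1 + 1, …, I.2` (1-based): the product `x_{I.1+1} ⋯ x_{I.2}`. -/
def curveWord (n : ℕ) (I : ℕ × ℕ) : FreeGroup (Fin n) :=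
  ((List.range (I.2 - I.1)).map (fun t => freeGen n (I.1 + t))).prod

/-- An essential round curve: it encloses at least `2` and at most `n-1` punctures. -/
def EssentialCurve (n : ℕ) (I : ℕ × ℕ) : Prop :=
  I.1 + 2 ≤ I.2 ∧ I.2 ≤ n ∧ I.2 - I.1 ≤ n - 1

/-- Two round curves are disjoint (as curves): the intervals are disjoint or nested. -/
def CurvesCompatible (I J : ℕ × ℕ) : Prop :=
  I.2 ≤ J.1 ∨ J.2 ≤ I.1 ∨ (I.1 ≤ J.1 ∧ J.2 ≤ I.2) ∨ (J.1 ≤ I.1 ∧ I.2 ≤ J.2)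

/-- `x` is reducible: some conjugate of `x` preserves, up to conjugacy in `π₁`
(i.e. up to isotopy) and orientation, a nonempty system of disjoint essential
round curves. -/
noncomputable def IsReducible (x : BraidGroup n) : Prop :=
  ∃ y, IsConj x y ∧ ∃ F : Finset (ℕ × ℕ), F.Nonempty ∧
    (∀ I ∈ F, EssentialCurve n I) ∧
    (∀ I ∈ F, ∀ J ∈ F, I ≠ J → CurvesCompatible I J) ∧
    (∀ I ∈ F, ∃ J ∈ F, ∃ g : FreeGroup (Fin n),
      artin n y (curveWord n I) = g * curveWord n J * g⁻¹ ∨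
      artin n y (curveWord n I) = g * (curveWord n J)⁻¹ * g⁻¹)

/-- `x` is pseudo-Anosov: neither periodic nor reducible (Nielsen–Thurston). -/
noncomputable def IsPseudoAnosov (x : BraidGroup n) : Prop :=
  ¬ IsPeriodic x ∧ ¬ IsReducible x

/-- `σ_i` (1-based index `i`) left-divides the positive braid `w`, i.e. `i` is
 a descent of `w`. -/
def HasDescent (n : ℕ) (i : ℕ) (w : BraidGroup n) : Prop := LeftDvd (σ' n (i - 1)) w

/-- `D(n,k,i)`: the probability that a product of `k` independent uniformly random
permutation braids begins with the descent `i` (1-based), computed by counting. -/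
noncomputable def descentProb (n k : ℕ) (i : ℕ) : ℝ :=
  ({ f : Fin k → BraidGroup n | (∀ j, IsPermBraid (f j)) ∧
      HasDescent n i (List.ofFn f).prod }.ncard : ℝ) / (n.factorial ^ k : ℝ)

/-- `D(n,k)`: the expected number of descents of a product of `k` random
permutation braids. -/
noncomputable def descentExp (n k : ℕ) : ℝ :=
  ∑ i ∈ Finset.Icc 1 (n - 1), descentProb n k i

/-- `d(n,k) = D(n,k) - D(n,k-1)`: the expected number of descents contributed by
the `k`-th factor. -/
noncomputable def descentInc (n k : ℕ) : ℝ := descentExp n k - descentExp n (k - 1)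

end BraidGroup

/-!
A Garside group is ordered by left divisibility. Suppose a positive `a ≤ Δ ^ r` conjugates `y` to
an element of larger infimum, and let `ι` be the initial factor of `y`. Then `ι⁻¹ * a * Δ` does the
same for the cycling of `y`, is again positive and at most `Δ ^ r`, and has larger degree than `a`.
Degrees of divisors of `Δ ^ r` are bounded, so cycling repeatedly must raise the infimum; an element
which is periodic under cycling therefore has maximal infimum. Decycling treats the supremum in the
same way, with `φ * a` for the final factor `φ`. This gives `RSSS(x) ⊆ USS(x)`.

For rigid `x`, let `Z m y` be the product of the first `m` initial factors met when cycling `y`,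
and let `k = sup y - inf y`. If the infimum stays constant, then `y * Δ ^ (-inf y) ≤ Z k y`, with
equality along the cycling orbit of a rigid element. Transporting a conjugator along cycling shows
that `deg (Z m y) - deg (Z m x)` is bounded above in `m`, so for `y` in `USS(x)`, whose orbit is
periodic, `y * Δ ^ (-inf y) = Z k y` as well. The same holds for the cycling of `y`, and comparing
the two equations identifies its final factor with the initial factor of `y`: decycling undoes
cycling, and `y` is periodic under both.

Garside's cancellation lemma makes the Artin monoid of a triangle-free graph cancellative with
greatest common divisors. The positive braid monoid is the case of a path; it embeds in a group
because `Δ ^ 2` is central, and this makes the braid group a Garside group.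
-/

section ArtinMonoid

variable {V : Type*} {M : Type*} [Monoid M] (Γ : SimpleGraph V)

/-- Families in a monoid satisfying the relations of the simply laced Artin group with Coxeter
graph `Γ`. -/
structure IsArtinFamily (f : V → M) : Prop where
  comm : ∀ {i j}, ¬ Γ.Adj i j → f i * f j = f j * f i
  braid : ∀ {i j}, Γ.Adj i j → f i * (f j * f i) = f j * (f i * f j)

theorem isArtinFamily_const (a : M) : IsArtinFamily Γ fun _ => a :=
  ⟨fun _ => rfl, fun _ => rfl⟩

open Classical in
/-- The word `i \ j` completing the generator `i` to a common multiple of `i` and `j`: it is `j i`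
for adjacent generators, `j` for distinct commuting ones, and empty when `i = j`. -/
noncomputable def complementWord (i j : V) : FreeMonoid V :=
  if i = j then 1 else if Γ.Adj i j then .of j * .of i else .of j

/-- The relations `i (i \ j) = j (j \ i)`, that is `i j i = j i j` for adjacent generators and
`i j = j i` for the other ones. -/
def ArtinRel (u v : FreeMonoid V) : Prop :=
  ∃ i j, u = .of i * complementWord Γ i j ∧ v = .of j * complementWord Γ j i

/-- The positive monoid of the simply laced Artin group with Coxeter graph `Γ`. -/
abbrev ArtinMonoid := PresentedMonoid (ArtinRel Γ)

namespace ArtinMonoid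

/-- The generators of the Artin monoid. -/
def s (i : V) : ArtinMonoid Γ := PresentedMonoid.of (ArtinRel Γ) i

/-- The class of the word `i \ j`, for which `s i * complement i j` is the least common multiple of
`s i` and `s j`. -/
noncomputable def complement (i j : V) : ArtinMonoid Γ :=
  PresentedMonoid.mk (ArtinRel Γ) (complementWord Γ i j)

variable {Γ} {i j k : V} {a b d x y z w w' : ArtinMonoid Γ}

theorem complement_self (i : V) : complement Γ i i = 1 := by
  simp [complement, complementWord]

theorem complement_of_adj (h : Γ.Adj i j) : complement Γ i j = s Γ j * s Γ i := by
  simp [complement, complementWord, h, h.ne, s, PresentedMonoid.of]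

theorem complement_of_not_adj (hne : i ≠ j) (h : ¬ Γ.Adj i j) : complement Γ i j = s Γ j := by
  simp [complement, complementWord, h, hne, s, PresentedMonoid.of]

theorem s_mul_complement (i j : V) : s Γ i * complement Γ i j = s Γ j * complement Γ j i :=
  PresentedMonoid.mk_eq_mk_of_rel ⟨i, j, rfl, rfl⟩

theorem s_comm (h : ¬ Γ.Adj i j) : s Γ i * s Γ j = s Γ j * s Γ i := by
  rcases eq_or_ne i j with rfl | hne
  · rfl
  · simpa only [complement_of_not_adj hne h, complement_of_not_adj hne.symm (h ·.symm)] using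
      s_mul_complement (Γ := Γ) i j

theorem s_braid (h : Γ.Adj i j) : s Γ i * (s Γ j * s Γ i) = s Γ j * (s Γ i * s Γ j) := by
  simpa only [complement_of_adj h, complement_of_adj h.symm] using s_mul_complement (Γ := Γ) i j

theorem s_left_comm (h : ¬ Γ.Adj i j) (x : ArtinMonoid Γ) :
    s Γ i * (s Γ j * x) = s Γ j * (s Γ i * x) := by
  rw [← mul_assoc, s_comm h, mul_assoc]

theorem s_left_braid (h : Γ.Adj i j) (x : ArtinMonoid Γ) :
    s Γ i * (s Γ j * (s Γ i * x)) = s Γ j * (s Γ i * (s Γ j * x)) := by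
  simpa only [mul_assoc] using congrArg (· * x) (s_braid h)

variable (Γ) in
theorem isArtinFamily_s : IsArtinFamily Γ (s Γ) :=
  ⟨s_comm, s_braid⟩

/-- The homomorphism from the Artin monoid that extends a family satisfying the relations. -/
noncomputable def lift {f : V → M} (hf : IsArtinFamily Γ f) : ArtinMonoid Γ →* M :=
  PresentedMonoid.lift f <| by
    rintro _ _ ⟨i, j, rfl, rfl⟩
    rcases eq_or_ne i j with rfl | hne
    · rfl
    by_cases h : Γ.Adj i j
    · simpa [complementWord, hne, hne.symm, h, h.symm] using hf.braid h
    · simpa [complementWord, hne, hne.symm, h, Γ.adj_comm j i] using hf.comm h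

theorem lift_s {f : V → M} (hf : IsArtinFamily Γ f) (i : V) : lift hf (s Γ i) = f i :=
  PresentedMonoid.lift_of ..

@[elab_as_elim]
theorem induction_on {p : ArtinMonoid Γ → Prop} (x : ArtinMonoid Γ) (one : p 1)
    (s_mul : ∀ i x, p x → p (s Γ i * x)) : p x := by
  obtain ⟨u, rfl⟩ := PresentedMonoid.surjective_mk x
  induction u using FreeMonoid.inductionOn' with
  | one => exact one
  | of_mul i u ih => exact s_mul i _ ih

theorem eq_one_or_exists_s_mul (x : ArtinMonoid Γ) : x = 1 ∨ ∃ i y, x = s Γ i * y := by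
  induction x using induction_on with
  | one => exact .inl rfl
  | s_mul i x => exact .inr ⟨i, x, rfl⟩

/-- The word length, on which the Artin relations agree. -/
noncomputable def length (x : ArtinMonoid Γ) : ℕ :=
  (lift (isArtinFamily_const Γ (Multiplicative.ofAdd 1)) x).toAdd

theorem length_mul (x y : ArtinMonoid Γ) : length (x * y) = length x + length y := by
  simp [length]

theorem length_one : length (1 : ArtinMonoid Γ) = 0 := by
  simp [length]

theorem length_s (i : V) : length (s Γ i) = 1 := by
  simp [length, lift_s]

theorem length_mk (u : FreeMonoid V) :
    length (PresentedMonoid.mk (ArtinRel Γ) u) = FreeMonoid.length u := by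
  induction u using FreeMonoid.inductionOn' with
  | one => simp [length]
  | of_mul i u ih =>
    rw [map_mul, length_mul, ih, FreeMonoid.length_mul, FreeMonoid.length_of]
    exact congrArg (· + _) (length_s i)

theorem eq_one_of_length_eq_zero (h : length x = 0) : x = 1 := by
  obtain rfl | ⟨i, y, rfl⟩ := eq_one_or_exists_s_mul x
  · rfl
  · rw [length_mul, length_s] at h
    omega

section GarsideLemma

/-- The conclusion `x = (i \ j) w` and `y = (j \ i) w` of Garside's cancellation lemma for an
equation `s i * x = s j * y`. -/
def CancelsTo (i j : V) (x y : ArtinMonoid Γ) : Prop :=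
  ∃ w, x = complement Γ i j * w ∧ y = complement Γ j i * w

/-- Garside's cancellation lemma for factors `x` of length less than `N`. -/
def CancelsBelow (Γ : SimpleGraph V) (N : ℕ) : Prop :=
  ∀ ⦃i j : V⦄ ⦃x y : ArtinMonoid Γ⦄, length x < N → s Γ i * x = s Γ j * y → CancelsTo i j x y

namespace CancelsTo

theorem symm (h : CancelsTo i j x y) : CancelsTo j i y x :=
  let ⟨w, hx, hy⟩ := h
  ⟨w, hy, hx⟩

theorem refl (i : V) (x : ArtinMonoid Γ) : CancelsTo i i x x :=
  ⟨x, by simp [complement_self]⟩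

theorem eq (h : CancelsTo i i x y) : x = y := by
  obtain ⟨w, rfl, rfl⟩ := h
  rfl

theorem mul_right (h : CancelsTo i j x y) (z : ArtinMonoid Γ) : CancelsTo i j (x * z) (y * z) := by
  obtain ⟨w, rfl, rfl⟩ := h
  exact ⟨w * z, mul_assoc .., mul_assoc ..⟩

theorem iff_of_not_adj (hne : i ≠ j) (h : ¬ Γ.Adj i j) :
    CancelsTo i j x y ↔ ∃ w, x = s Γ j * w ∧ y = s Γ i * w := by
  rw [CancelsTo, complement_of_not_adj hne h, complement_of_not_adj hne.symm (h ·.symm)]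

theorem iff_of_adj (h : Γ.Adj i j) :
    CancelsTo i j x y ↔ ∃ w, x = s Γ j * (s Γ i * w) ∧ y = s Γ i * (s Γ j * w) := by
  simp only [CancelsTo, complement_of_adj h, complement_of_adj h.symm, mul_assoc]

variable {N : ℕ}

theorem trans_comm_comm (hN : CancelsBelow Γ N) (hij : ¬ Γ.Adj i j) (hjk : ¬ Γ.Adj j k)
    (hw : length w < N) (h : s Γ i * w = s Γ k * w') :
    CancelsTo i k (s Γ j * w) (s Γ j * w') := by
  rcases eq_or_ne i k with rfl | hne
  · rw [(hN hw h).eq]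
    exact refl _ _
  by_cases hik : Γ.Adj i k
  · obtain ⟨t, rfl, rfl⟩ := (iff_of_adj hik).1 (hN hw h)
    exact (iff_of_adj hik).2 ⟨s Γ j * t, by rw [s_left_comm hjk, s_left_comm (hij ·.symm)],
      by rw [s_left_comm (hij ·.symm), s_left_comm hjk]⟩
  · obtain ⟨t, rfl, rfl⟩ := (iff_of_not_adj hne hik).1 (hN hw h)
    exact (iff_of_not_adj hne hik).2 ⟨s Γ j * t, s_left_comm hjk t, s_left_comm (hij ·.symm) t⟩

theorem trans_comm_adj (hN : CancelsBelow Γ N) (hne : i ≠ j) (hij : ¬ Γ.Adj i j)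
    (hjk : Γ.Adj j k) (hw : length w < N) (h : s Γ i * w = s Γ k * (s Γ j * w')) :
    CancelsTo i k (s Γ j * w) (s Γ j * (s Γ k * w')) := by
  have hik : i ≠ k := fun h => hij (h ▸ hjk.symm)
  have hji : ¬ Γ.Adj j i := fun h => hij h.symm
  have hlen := congrArg length h
  simp only [length_mul, length_s] at hlen
  by_cases hadj : Γ.Adj i k
  · obtain ⟨t, rfl, ht⟩ := (iff_of_adj hadj).1 (hN hw h)
    obtain ⟨r, rfl, hr⟩ := (iff_of_not_adj hne.symm hji).1 (hN (by omega) ht)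
    simp only [length_mul, length_s] at hlen hw
    obtain ⟨q, rfl, rfl⟩ := (iff_of_adj hjk.symm).1 (hN (by omega) hr)
    refine (iff_of_adj hadj).2 ⟨s Γ j * (s Γ k * (s Γ i * q)), ?_, ?_⟩
    · rw [s_left_comm hij, s_left_braid hjk, s_left_braid hadj.symm, s_left_comm hji]
    · rw [s_left_braid hadj.symm, s_left_comm hji, s_left_comm hij q, s_left_braid hjk]
  · obtain ⟨t, rfl, ht⟩ := (iff_of_not_adj hik hadj).1 (hN hw h)
    obtain ⟨r, rfl, rfl⟩ := (iff_of_not_adj hne.symm hji).1 (hN (by omega) ht)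
    refine (iff_of_not_adj hik hadj).2 ⟨s Γ j * (s Γ k * r), s_left_braid hjk r, ?_⟩
    rw [s_left_comm (hadj ·.symm), s_left_comm hji]

theorem trans_adj_adj (hN : CancelsBelow Γ N) (hij : Γ.Adj i j) (hjk : Γ.Adj j k)
    (hik : ¬ Γ.Adj i k) (hw : length w + 1 < N)
    (h : s Γ i * (s Γ j * w) = s Γ k * (s Γ j * w')) :
    CancelsTo i k (s Γ j * (s Γ i * w)) (s Γ j * (s Γ k * w')) := by
  have hlen := congrArg length h
  simp only [length_mul, length_s] at hlen
  have hcancel := hN (by simp only [length_mul, length_s]; omega) h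
  rcases eq_or_ne i k with rfl | hne
  · rw [(hN (by omega) hcancel.eq).eq]
    exact refl _ _
  obtain ⟨t, hkt, hit⟩ := (iff_of_not_adj hne hik).1 hcancel
  obtain ⟨r, rfl, rfl⟩ := (iff_of_adj hjk).1 (hN (by omega) hkt)
  obtain ⟨q, rfl, hq⟩ := (iff_of_adj hij.symm).1 (hN (by omega) hit)
  simp only [length_mul, length_s] at hlen hw
  have hkr : s Γ k * r = s Γ i * q := (hN (by simp only [length_mul, length_s]; omega) hq).eq
  obtain ⟨p, rfl, rfl⟩ := (iff_of_not_adj hne.symm (hik ·.symm)).1 (hN (by omega) hkr)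
  refine (iff_of_not_adj hne hik).2 ⟨s Γ j * (s Γ k * (s Γ i * (s Γ j * p))), ?_, ?_⟩
  · rw [s_left_comm hik, s_left_braid hij, s_left_braid hjk]
  · rw [s_left_comm (hik ·.symm), s_left_braid hjk.symm, s_left_braid hij.symm, s_left_comm hik]

theorem trans (hΓ : Γ.CliqueFree 3) (hN : CancelsBelow Γ N) (hy : length y ≤ N)
    (h₁ : CancelsTo i j x y) (h₂ : CancelsTo j k y z) : CancelsTo i k x z := by
  rcases eq_or_ne i j with rfl | hij
  · exact h₁.eq ▸ h₂
  rcases eq_or_ne j k with rfl | hjk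
  · exact h₂.eq ▸ h₁
  by_cases aij : Γ.Adj i j <;> by_cases ajk : Γ.Adj j k
  · obtain ⟨w, rfl, rfl⟩ := (iff_of_adj aij).1 h₁
    obtain ⟨w', h, rfl⟩ := (iff_of_adj ajk).1 h₂
    have aik : ¬ Γ.Adj i k := fun aik => by
      classical exact hΓ _ (SimpleGraph.is3Clique_triple_iff.2 ⟨aij, aik, ajk⟩)
    simp only [length_mul, length_s] at hy
    exact trans_adj_adj hN aij ajk aik (by omega) h
  · obtain ⟨w, rfl, rfl⟩ := (iff_of_adj aij).1 h₁
    obtain ⟨w', h, rfl⟩ := (iff_of_not_adj hjk ajk).1 h₂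
    have hlen := congrArg length h
    simp only [length_mul, length_s] at hy hlen
    exact (trans_comm_adj hN hjk.symm (ajk ·.symm) aij.symm (by omega) h.symm).symm
  · obtain ⟨w, rfl, rfl⟩ := (iff_of_not_adj hij aij).1 h₁
    obtain ⟨w', h, rfl⟩ := (iff_of_adj ajk).1 h₂
    simp only [length_mul, length_s] at hy
    exact trans_comm_adj hN hij aij ajk (by omega) h
  · obtain ⟨w, rfl, rfl⟩ := (iff_of_not_adj hij aij).1 h₁
    obtain ⟨w', h, rfl⟩ := (iff_of_not_adj hjk ajk).1 h₂
    simp only [length_mul, length_s] at hy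
    exact trans_comm_comm hN aij ajk (by omega) h

end CancelsTo

/-- Two words are both empty, or their first letters and their tails satisfy `CancelsTo`; this is
the form of Garside's lemma that can be proved by induction on a derivation. -/
def WordsCancel (Γ : SimpleGraph V) (u v : FreeMonoid V) : Prop :=
  (u = 1 ∧ v = 1) ∨ ∃ i j u' v', u = .of i * u' ∧ v = .of j * v' ∧
    CancelsTo i j (PresentedMonoid.mk (ArtinRel Γ) u') (PresentedMonoid.mk (ArtinRel Γ) v')

theorem wordsCancel_of_conGen (hΓ : Γ.CliqueFree 3) {N : ℕ} (hN : CancelsBelow Γ N)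
    {u v : FreeMonoid V} (h : ConGen.Rel (ArtinRel Γ) u v) (hu : FreeMonoid.length u ≤ N + 1) :
    WordsCancel Γ u v := by
  have length_eq {u v} (h : ConGen.Rel (ArtinRel Γ) u v) : u.length = v.length := by
    rw [← length_mk (Γ := Γ), ← length_mk (Γ := Γ), PresentedMonoid.mk_eq_mk_iff.2 h]
  induction h with
  | of u v h =>
    obtain ⟨i, j, rfl, rfl⟩ := h
    exact .inr ⟨i, j, _, _, rfl, rfl, 1, (mul_one _).symm, (mul_one _).symm⟩
  | refl u =>
    cases u using FreeMonoid.casesOn with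
    | one => exact .inl ⟨rfl, rfl⟩
    | of_mul i u => exact .inr ⟨i, i, u, u, rfl, rfl, .refl _ _⟩
  | symm h ih =>
    rcases ih (length_eq h ▸ hu) with ⟨hu, hv⟩ | ⟨i, j, u', v', hu, hv, h⟩
    · exact .inl ⟨hv, hu⟩
    · exact .inr ⟨j, i, v', u', hv, hu, h.symm⟩
  | trans h₁ h₂ ih₁ ih₂ =>
    have hv := length_eq h₁ ▸ hu
    rcases ih₁ hu with ⟨rfl, rfl⟩ | ⟨i, j, u', v', rfl, rfl, h⟩
    · exact ih₂ hv
    rcases ih₂ hv with ⟨h1, -⟩ | ⟨j', k, v'', w', hvv, rfl, h'⟩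
    · simp at h1
    obtain ⟨rfl, rfl⟩ : j = j' ∧ v' = v'' := List.cons_eq_cons.1 hvv
    refine .inr ⟨i, k, u', w', rfl, rfl, h.trans hΓ hN ?_ h'⟩
    rw [length_mk]
    rw [FreeMonoid.length_mul, FreeMonoid.length_of] at hv
    omega
  | mul h₁ h₂ ih₁ ih₂ =>
    rw [FreeMonoid.length_mul] at hu
    rcases ih₁ (by omega) with ⟨rfl, rfl⟩ | ⟨i, j, u', v', rfl, rfl, h⟩
    · simpa only [one_mul] using ih₂ (by omega)
    · refine .inr ⟨i, j, _, _, mul_assoc .., mul_assoc .., ?_⟩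
      rw [map_mul, map_mul, PresentedMonoid.mk_eq_mk_iff.2 h₂]
      exact h.mul_right _

theorem cancelsBelow (hΓ : Γ.CliqueFree 3) (N : ℕ) : CancelsBelow Γ N := by
  induction N with
  | zero => exact fun _ _ _ _ h => absurd h (Nat.not_lt_zero _)
  | succ N hN =>
    intro i j x y hx h
    obtain ⟨u, rfl⟩ := PresentedMonoid.surjective_mk x
    obtain ⟨v, rfl⟩ := PresentedMonoid.surjective_mk y
    have hrel : ConGen.Rel (ArtinRel Γ) (.of i * u) (.of j * v) :=
      PresentedMonoid.mk_eq_mk_iff.1 (by rw [map_mul, map_mul]; exact h)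
    rw [length_mk] at hx
    rcases wordsCancel_of_conGen hΓ hN hrel
      (by rw [FreeMonoid.length_mul, FreeMonoid.length_of]; omega) with ⟨h1, -⟩ | h
    · simp at h1
    · obtain ⟨i', j', u', v', hu, hv, h⟩ := h
      obtain ⟨rfl, rfl⟩ : i = i' ∧ u = u' := List.cons_eq_cons.1 hu
      obtain ⟨rfl, rfl⟩ : j = j' ∧ v = v' := List.cons_eq_cons.1 hv
      exact h

theorem cancelsTo_of_s_mul_eq (hΓ : Γ.CliqueFree 3) (h : s Γ i * x = s Γ j * y) :
    CancelsTo i j x y :=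
  cancelsBelow hΓ (length x + 1) (Nat.lt_succ_self _) h

end GarsideLemma

theorem isLeftCancelMul (hΓ : Γ.CliqueFree 3) : IsLeftCancelMul (ArtinMonoid Γ) where
  mul_left_cancel a x y h := by
    induction a using induction_on with
    | one => simpa only [one_mul] using h
    | s_mul i a ih =>
      simp only [mul_assoc] at h
      exact ih (cancelsTo_of_s_mul_eq hΓ h).eq

theorem mul_s_mul_complement_dvd (hΓ : Γ.CliqueFree 3) (hi : z * s Γ i ∣ x)
    (hj : z * s Γ j ∣ x) : z * s Γ i * complement Γ i j ∣ x := by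
  have := isLeftCancelMul hΓ
  obtain ⟨y, rfl⟩ := hi
  obtain ⟨y', h⟩ := hj
  rw [mul_assoc, mul_assoc, mul_left_cancel_iff] at h
  obtain ⟨w, rfl, -⟩ := cancelsTo_of_s_mul_eq hΓ h
  exact ⟨w, (mul_assoc ..).symm⟩

theorem exists_dvd_dvd_of_dvd (hΓ : Γ.CliqueFree 3) {p q : ArtinMonoid Γ}
    (hpa : z * p ∣ a) (hpb : z * p ∣ b) (hqa : z * q ∣ a) (hqb : z * q ∣ b) :
    ∃ u, z * p ∣ u ∧ z * q ∣ u ∧ u ∣ a ∧ u ∣ b := by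
  obtain ⟨N, hN⟩ : ∃ N, length a ≤ length z + N := ⟨length a, by omega⟩
  induction N generalizing z p q with
  | zero =>
    have eq_one {r : ArtinMonoid Γ} (h : z * r ∣ a) : r = 1 := by
      obtain ⟨c, rfl⟩ := h
      simp only [length_mul] at hN
      exact eq_one_of_length_eq_zero (by omega)
    rw [eq_one hpa, eq_one hqa] at *
    exact ⟨z * 1, dvd_rfl, dvd_rfl, hpa, hpb⟩
  | succ N ih =>
    obtain rfl | ⟨i, p, rfl⟩ := eq_one_or_exists_s_mul p
    · exact ⟨z * q, ⟨q, by rw [mul_one]⟩, dvd_rfl, hqa, hqb⟩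
    obtain rfl | ⟨j, q, rfl⟩ := eq_one_or_exists_s_mul q
    · exact ⟨z * (s Γ i * p), dvd_rfl, ⟨s Γ i * p, by rw [mul_one]⟩, hpa, hpb⟩
    simp only [← mul_assoc] at *
    have hlen (k : V) : length a ≤ length (z * s Γ k) + N := by
      rw [length_mul, length_s]; omega
    have lcm_dvd {c} (hp : z * s Γ i * p ∣ c) (hq : z * s Γ j * q ∣ c) :
        z * s Γ i * complement Γ i j ∣ c :=
      mul_s_mul_complement_dvd hΓ (dvd_of_mul_right_dvd hp) (dvd_of_mul_right_dvd hq)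
    obtain ⟨_, hpu, ⟨t, rfl⟩, hua, hub⟩ :=
      ih hpa hpb (lcm_dvd hpa hqa) (lcm_dvd hpb hqb) (hlen i)
    have key : z * s Γ i * complement Γ i j * t = z * s Γ j * (complement Γ j i * t) := by
      rw [mul_assoc z, s_mul_complement, ← mul_assoc, ← mul_assoc]
    rw [key] at hpu hua hub
    obtain ⟨u, htu, hqu, hua, hub⟩ := ih hua hub hqa hqb (hlen j)
    exact ⟨u, hpu.trans htu, hqu, hua, hub⟩

theorem exists_gcd (hΓ : Γ.CliqueFree 3) (a b : ArtinMonoid Γ) :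
    ∃ d, ∀ c, c ∣ d ↔ c ∣ a ∧ c ∣ b := by
  have length_le {c d : ArtinMonoid Γ} (h : c ∣ d) : length c ≤ length d := by
    obtain ⟨e, rfl⟩ := h
    rw [length_mul]
    exact Nat.le_add_right _ _
  have hfin : (length '' {c | c ∣ a ∧ c ∣ b}).Finite :=
    (Set.finite_Iic (length a)).subset (by rintro _ ⟨c, hc, rfl⟩; exact length_le hc.1)
  obtain ⟨_, ⟨d, ⟨hda, hdb⟩, rfl⟩, hmax⟩ :=
    Set.exists_max_image _ id hfin ⟨_, 1, ⟨one_dvd a, one_dvd b⟩, rfl⟩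
  refine ⟨d, fun c => ⟨fun h => ⟨h.trans hda, h.trans hdb⟩, fun ⟨hca, hcb⟩ => ?_⟩⟩
  obtain ⟨_, hcu, ⟨t, rfl⟩, hua, hub⟩ := exists_dvd_dvd_of_dvd hΓ (a := a) (b := b)
    (z := 1) (p := c) (q := d)
    (by rwa [one_mul]) (by rwa [one_mul]) (by rwa [one_mul]) (by rwa [one_mul])
  have hlen := hmax _ ⟨_, ⟨hua, hub⟩, rfl⟩
  simp only [id, length_mul] at hlen
  rwa [eq_one_of_length_eq_zero (x := t) (by omega), one_mul, one_mul, mul_one] at hcu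

end ArtinMonoid

end ArtinMonoid

section GroupOfFractions

universe u

variable {M : Type*} [Monoid M] [IsLeftCancelMul M] {c : M}

theorem isCancelMul_of_forall_dvd_pow (hc : ∀ x, Commute c x) (hdvd : ∀ x, ∃ r : ℕ, x ∣ c ^ r) :
    IsCancelMul M where
  mul_right_cancel a x y h := by
    obtain ⟨r, b, hb⟩ := hdvd a
    refine mul_left_cancel (a := c ^ r) ?_
    rw [((hc x).pow_left r).eq, ((hc y).pow_left r).eq, hb, ← mul_assoc, ← mul_assoc]
    exact congrArg (· * b) h

/-- The Ore condition for a monoid with a central element `c` whose powers are common multiples: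
if `s * t = c ^ r` then `c ^ r * a = (a * t) * s`. -/
noncomputable abbrev oreSetOfForallDvdPow (hc : ∀ x, Commute c x)
    (hdvd : ∀ x, ∃ r : ℕ, x ∣ c ^ r) : OreLocalization.OreSet (⊤ : Submonoid M) :=
  have := isCancelMul_of_forall_dvd_pow hc hdvd
  have hore (a s : M) : ∃ (t : M) (r : ℕ), c ^ r * a = a * t * s := by
    obtain ⟨r, t, ht⟩ := hdvd s
    have hts : t * s = c ^ r := mul_left_cancel (a := s) <| by
      rw [← mul_assoc, ← ht, ((hc s).pow_left r).eq]
    exact ⟨t, r, by rw [mul_assoc, hts, ((hc a).pow_left r).eq]⟩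
  { ore_right_cancel := fun x y s h => ⟨1, by rw [mul_right_cancel h]⟩
    oreNum := fun a s => a * (hore a s).choose
    oreDenom := fun a s => ⟨c ^ (hore a s).choose_spec.choose, trivial⟩
    ore_eq := fun a s => (hore a s).choose_spec.choose_spec }

theorem exists_injective_monoidHom_group {M : Type u} [Monoid M] [IsLeftCancelMul M] {c : M}
    (hc : ∀ x, Commute c x) (hdvd : ∀ x, ∃ r : ℕ, x ∣ c ^ r) :
    ∃ (G : Type u) (_ : Group G) (f : M →* G), Function.Injective f := by
  let _ := oreSetOfForallDvdPow hc hdvd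
  have hinj : Function.Injective
      (OreLocalization.numeratorHom : M →* OreLocalization (⊤ : Submonoid M) M) := by
    intro x y h
    obtain ⟨u, v, huv, hv⟩ := OreLocalization.oreDiv_eq_iff.1 h
    simp only [OneMemClass.coe_one, mul_one, Submonoid.smul_def, smul_eq_mul] at huv hv
    rw [hv] at huv
    exact (mul_left_cancel huv).symm
  refine ⟨(OreLocalization (⊤ : Submonoid M) M)ˣ, inferInstance,
    IsUnit.liftRight OreLocalization.numeratorHom
      fun x => OreLocalization.numerator_isUnit ⟨x, Submonoid.mem_top x⟩, fun x y h => hinj ?_⟩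
  simpa only [IsUnit.coe_liftRight] using congrArg Units.val h

end GroupOfFractions

section HalfTwist

variable {M N : Type*} [Monoid M] [Monoid N] {m i j k : ℕ} {s : ℕ → M}

/-- The braid relations for the first `m` terms of a sequence. -/
structure IsBraidSequence (m : ℕ) (s : ℕ → M) : Prop where
  comm : ∀ {i j}, i + 1 < j → j < m → s j * s i = s i * s j
  braid : ∀ {i}, i + 1 < m → s (i + 1) * s i * s (i + 1) = s i * s (i + 1) * s i

/-- The product `s 0 * s 1 * ⋯ * s (j - 1)`. -/
def ascendingProd (s : ℕ → M) (j : ℕ) : M := ((List.range j).map s).prod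

/-- The half twist on `j + 1` strands, `(s 0 ⋯ s (j - 1)) (s 0 ⋯ s (j - 2)) ⋯ (s 0 * s 1) * s 0`. -/
def halfTwist (s : ℕ → M) (j : ℕ) : M :=
  ((List.range j).reverse.map fun i => ascendingProd s (i + 1)).prod

theorem ascendingProd_succ (s : ℕ → M) (j : ℕ) :
    ascendingProd s (j + 1) = ascendingProd s j * s j :=
  List.prod_range_succ ..

theorem ascendingProd_succ' (s : ℕ → M) (j : ℕ) :
    ascendingProd s (j + 1) = s 0 * ascendingProd (fun i => s (i + 1)) j :=
  List.prod_range_succ' ..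

theorem halfTwist_succ (s : ℕ → M) (j : ℕ) :
    halfTwist s (j + 1) = ascendingProd s (j + 1) * halfTwist s j := by
  simp [halfTwist, List.range_succ]

theorem map_halfTwist (f : M →* N) (s : ℕ → M) (j : ℕ) :
    f (halfTwist s j) = halfTwist (f ∘ s) j := by
  simp [halfTwist, ascendingProd, map_list_prod, Function.comp_def]

namespace IsBraidSequence

theorem mul_ascendingProd_comm (hs : IsBraidSequence m s) (h : j < k) (hk : k < m) :
    s k * ascendingProd s j = ascendingProd s j * s k := by
  induction j with
  | zero => simp [ascendingProd]
  | succ j ih =>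
    rw [ascendingProd_succ, ← mul_assoc, ih (by omega), mul_assoc, hs.comm h hk, mul_assoc]

theorem succ_mul_ascendingProd (hs : IsBraidSequence m s) (h : i + 1 < j) (hj : j ≤ m) :
    s (i + 1) * ascendingProd s j = ascendingProd s j * s i := by
  induction j, h using Nat.le_induction with
  | base =>
    calc s (i + 1) * ascendingProd s (i + 2)
        = s (i + 1) * ascendingProd s i * s i * s (i + 1) := by
          simp only [ascendingProd_succ, mul_assoc]
      _ = ascendingProd s i * (s (i + 1) * s i * s (i + 1)) := by
          rw [hs.mul_ascendingProd_comm (by omega) (by omega)]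
          simp only [mul_assoc]
      _ = ascendingProd s (i + 2) * s i := by
          rw [hs.braid (by omega)]
          simp only [ascendingProd_succ, mul_assoc]
  | succ j h ih =>
    rw [ascendingProd_succ, ← mul_assoc, ih (by omega), mul_assoc, mul_assoc,
      hs.comm h (by omega)]

theorem ascendingProd_succ_mul_ascendingProd (hs : IsBraidSequence m s) (h : i < j)
    (hj : j ≤ m) : ascendingProd (fun i => s (i + 1)) i * ascendingProd s j =
      ascendingProd s j * ascendingProd s i := by
  induction i with
  | zero => simp [ascendingProd]
  | succ i ih =>
    rw [ascendingProd_succ, mul_assoc, hs.succ_mul_ascendingProd h hj, ← mul_assoc,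
      ih (by omega), mul_assoc, ascendingProd_succ]

theorem mul_halfTwist_comm (hs : IsBraidSequence m s) (h : j < k) (hk : k < m) :
    s k * halfTwist s j = halfTwist s j * s k := by
  induction j with
  | zero => simp [halfTwist]
  | succ j ih =>
    rw [halfTwist_succ, ← mul_assoc, hs.mul_ascendingProd_comm h hk, mul_assoc, ih (by omega),
      mul_assoc]

theorem halfTwist_mul_last (hs : IsBraidSequence m s) (hj : j + 1 ≤ m) :
    halfTwist s (j + 1) * s j = s 0 * halfTwist s (j + 1) := by
  cases j with
  | zero => simp [halfTwist, ascendingProd]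
  | succ j =>
    calc halfTwist s (j + 2) * s (j + 1)
        = ascendingProd s (j + 2) * (ascendingProd s (j + 1) * (halfTwist s j * s (j + 1))) := by
          simp only [halfTwist_succ, mul_assoc]
      _ = ascendingProd s (j + 2) * ascendingProd s (j + 2) * halfTwist s j := by
          rw [← hs.mul_halfTwist_comm (by omega) (by omega), ascendingProd_succ s (j + 1)]
          simp only [mul_assoc]
      _ = s 0 * (ascendingProd (fun i => s (i + 1)) (j + 1) * ascendingProd s (j + 2)) *
            halfTwist s j := by
          conv_lhs => enter [1, 1]; rw [ascendingProd_succ']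
          simp only [mul_assoc]
      _ = s 0 * halfTwist s (j + 2) := by
          rw [hs.ascendingProd_succ_mul_ascendingProd (by omega) hj]
          simp only [halfTwist_succ, mul_assoc]

theorem halfTwist_mul (hs : IsBraidSequence m s) (h : i < j) (hj : j ≤ m) :
    halfTwist s j * s i = s (j - 1 - i) * halfTwist s j := by
  induction j, h using Nat.le_induction with
  | base => simpa using hs.halfTwist_mul_last hj
  | succ j h ih =>
    rw [halfTwist_succ, mul_assoc, ih (by omega), ← mul_assoc,
      ← hs.succ_mul_ascendingProd (by omega) hj, mul_assoc]
    congr 2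
    omega

theorem dvd_halfTwist (hs : IsBraidSequence m s) (h : i < j) (hj : j ≤ m) :
    s i ∣ halfTwist s j := by
  induction j generalizing i with
  | zero => omega
  | succ j ih =>
    rw [halfTwist_succ]
    cases i with
    | zero =>
      rw [ascendingProd_succ', mul_assoc]
      exact dvd_mul_right ..
    | succ i =>
      obtain ⟨q, hq⟩ := ih (i := i) (by omega) (by omega)
      rw [hq, ← mul_assoc, ← hs.succ_mul_ascendingProd h hj, mul_assoc]
      exact dvd_mul_right ..

end IsBraidSequence

/-- The extension of a finite family to a sequence, by `1` out of range. -/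
def extendByOne (f : Fin m → M) (i : ℕ) : M := if h : i < m then f ⟨i, h⟩ else 1

theorem extendByOne_val (f : Fin m → M) (i : Fin m) : extendByOne f i = f i :=
  dif_pos i.2

theorem map_comp_extendByOne (g : M →* N) (f : Fin m → M) :
    g ∘ extendByOne f = extendByOne (g ∘ f) := by
  ext i
  by_cases h : i < m <;> simp [extendByOne, h]

namespace IsArtinFamily

variable {f : Fin m → M}

theorem isBraidSequence (hf : IsArtinFamily (SimpleGraph.pathGraph m) f) :
    IsBraidSequence m (extendByOne f) where
  comm {i j} hij hj := by
    have := hf.comm (i := ⟨j, hj⟩) (j := ⟨i, by omega⟩)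
      (by rw [SimpleGraph.pathGraph_adj]; simp only; omega)
    simpa [extendByOne, hj, show i < m by omega] using this
  braid {i} hi := by
    have := hf.braid (i := ⟨i + 1, hi⟩) (j := ⟨i, by omega⟩)
      (by rw [SimpleGraph.pathGraph_adj]; exact .inr rfl)
    simpa [extendByOne, hi, show i < m by omega, mul_assoc] using this

theorem halfTwist_mul (hf : IsArtinFamily (SimpleGraph.pathGraph m) f) (i : Fin m) :
    halfTwist (extendByOne f) m * f i = f i.rev * halfTwist (extendByOne f) m := by
  have hrev : m - 1 - i = i.rev := by rw [Fin.val_rev]; omega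
  simpa only [hrev, extendByOne_val] using hf.isBraidSequence.halfTwist_mul i.2 le_rfl

theorem dvd_halfTwist (hf : IsArtinFamily (SimpleGraph.pathGraph m) f) (i : Fin m) :
    f i ∣ halfTwist (extendByOne f) m := by
  simpa only [extendByOne_val] using hf.isBraidSequence.dvd_halfTwist i.2 le_rfl

end IsArtinFamily

end HalfTwist

section BraidMonoid

/-- The monoid of positive braids on `m + 1` strands, presented by generators and relations. -/
abbrev BraidMonoid (m : ℕ) := ArtinMonoid (SimpleGraph.pathGraph m)

namespace BraidMonoid

open ArtinMonoid SimpleGraph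

variable {m : ℕ}

theorem cliqueFree_pathGraph (m : ℕ) : (pathGraph m).CliqueFree 3 := by
  intro t ht
  obtain ⟨a, b, c, hab, hac, hbc, -⟩ := is3Clique_iff.1 ht
  rw [pathGraph_adj] at hab hac hbc
  omega

/-- The half twist in the braid monoid. -/
noncomputable def delta (m : ℕ) : BraidMonoid m := halfTwist (extendByOne (s (pathGraph m))) m

theorem commute_delta_sq (x : BraidMonoid m) : Commute (delta m ^ 2) x := by
  induction x using ArtinMonoid.induction_on with
  | one => exact .one_right _
  | s_mul i x ih =>
    have hi := (isArtinFamily_s (pathGraph m)).halfTwist_mul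
    refine Commute.mul_right ?_ ih
    rw [Commute, SemiconjBy, sq, mul_assoc]
    rw [delta, hi, ← mul_assoc, hi, Fin.rev_rev, mul_assoc]

theorem exists_dvd_delta_sq_pow (x : BraidMonoid m) : ∃ r : ℕ, x ∣ (delta m ^ 2) ^ r := by
  induction x using ArtinMonoid.induction_on with
  | one => exact ⟨0, one_dvd _⟩
  | s_mul i x ih =>
    obtain ⟨r, y, hy⟩ := ih
    obtain ⟨q, hq⟩ : s (pathGraph m) i ∣ delta m ^ 2 :=
      ((isArtinFamily_s _).dvd_halfTwist i).trans (dvd_pow_self _ two_ne_zero)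
    refine ⟨r + 1, y * q, ?_⟩
    calc (delta m ^ 2) ^ (r + 1) = (delta m ^ 2) ^ r * s _ i * q := by
          rw [pow_succ, hq, mul_assoc]
      _ = s _ i * x * (y * q) := by
          rw [((commute_delta_sq _).pow_left r).eq, hy]
          simp only [mul_assoc]

theorem exists_injective_monoidHom_group (m : ℕ) :
    ∃ (G : Type) (_ : Group G) (f : BraidMonoid m →* G), Function.Injective f :=
  have := isLeftCancelMul (cliqueFree_pathGraph m)
  _root_.exists_injective_monoidHom_group commute_delta_sq exists_dvd_delta_sq_pow

end BraidMonoid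

end BraidMonoid

namespace BraidGroup

variable {n : ℕ}

section PositiveBraids

open ArtinMonoid SimpleGraph

theorem isArtinFamily_σ : IsArtinFamily (pathGraph (n - 1)) (σ (n := n)) where
  comm {i j} hij := by
    have key {i j : Fin (n - 1)} (h : (i : ℕ) + 1 < j) : σ (n := n) i * σ j = σ j * σ i := by
      have := PresentedGroup.one_of_mem (rels := braidRels n) (.inl ⟨i, j, h, rfl⟩)
      rwa [map_mul, map_mul, map_mul, map_inv, map_inv, mul_inv_eq_one, mul_inv_eq_iff_eq_mul]
        at this
    rw [pathGraph_adj] at hij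
    rcases lt_trichotomy i j with h | rfl | h
    · exact key (by omega)
    · rfl
    · exact (key (by omega)).symm
  braid {i j} hij := by
    have key {i j : Fin (n - 1)} (h : (i : ℕ) + 1 = j) :
        σ (n := n) i * (σ j * σ i) = σ j * (σ i * σ j) := by
      have := PresentedGroup.one_of_mem (rels := braidRels n) (.inr ⟨i, j, h, rfl⟩)
      rw [map_mul, map_inv, mul_inv_eq_one] at this
      simp only [map_mul, mul_assoc] at this
      exact this
    rcases pathGraph_adj.1 hij with h | h
    · exact key h
    · exact (key h).symm

/-- The homomorphism out of the braid group determined by a family satisfying the braid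
relations. -/
def lift {G : Type*} [Group G] {f : Fin (n - 1) → G} (hf : IsArtinFamily (pathGraph (n - 1)) f) :
    BraidGroup n →* G :=
  PresentedGroup.toGroup (f := f) <| by
    rintro r (⟨i, j, h, rfl⟩ | ⟨i, j, h, rfl⟩)
    · have hij : ¬ (pathGraph (n - 1)).Adj i j := by rw [pathGraph_adj]; omega
      simp [hf.comm hij]
    · have hij : (pathGraph (n - 1)).Adj i j := pathGraph_adj.2 (.inl h)
      rw [map_mul, map_inv, mul_inv_eq_one]
      simp [mul_assoc, hf.braid hij]

theorem lift_σ {G : Type*} [Group G] {f : Fin (n - 1) → G}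
    (hf : IsArtinFamily (pathGraph (n - 1)) f) (i : Fin (n - 1)) : lift hf (σ i) = f i :=
  PresentedGroup.toGroup.of _

/-- The canonical homomorphism from the braid monoid to the braid group. -/
noncomputable def ofMonoid (n : ℕ) : BraidMonoid (n - 1) →* BraidGroup n :=
  ArtinMonoid.lift isArtinFamily_σ

theorem ofMonoid_s (i : Fin (n - 1)) : ofMonoid n (s _ i) = σ i :=
  ArtinMonoid.lift_s _ i

theorem ofMonoid_injective : Function.Injective (ofMonoid n) := by
  obtain ⟨G, _, f, hf⟩ := BraidMonoid.exists_injective_monoidHom_group (n - 1)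
  have hfs : IsArtinFamily (pathGraph (n - 1)) fun i => f (s _ i) :=
    ⟨fun h => by rw [← map_mul, ← map_mul, s_comm h],
      fun h => by simp only [← map_mul, s_braid h]⟩
  have hcomp (x : BraidMonoid (n - 1)) : lift hfs (ofMonoid n x) = f x := by
    induction x using ArtinMonoid.induction_on with
    | one => simp
    | s_mul i x ih => rw [map_mul, map_mul, map_mul, ih, ofMonoid_s, lift_σ]
  exact fun x y h => hf (by rw [← hcomp, h, hcomp])

theorem isPositive_iff_exists_ofMonoid {x : BraidGroup n} :
    IsPositive x ↔ ∃ y, ofMonoid n y = x := by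
  constructor
  · intro h
    refine (Submonoid.closure_le (S := MonoidHom.mrange (ofMonoid n))).2 ?_ h
    rintro _ ⟨i, rfl⟩
    exact ⟨s _ i, ofMonoid_s i⟩
  · rintro ⟨y, rfl⟩
    induction y using ArtinMonoid.induction_on with
    | one => rw [map_one]; exact one_mem (positives n)
    | s_mul i y ih =>
      rw [map_mul, ofMonoid_s]
      exact mul_mem (S := Submonoid (BraidGroup n)) (Submonoid.subset_closure ⟨i, rfl⟩) ih

theorem Δ_eq_halfTwist : Δ n = halfTwist (extendByOne σ) (n - 1) := rfl

theorem ofMonoid_delta : ofMonoid n (BraidMonoid.delta (n - 1)) = Δ n := by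
  rw [BraidMonoid.delta, map_halfTwist, map_comp_extendByOne, Δ_eq_halfTwist]
  exact congrArg (fun f => halfTwist (extendByOne f) (n - 1)) (funext ofMonoid_s)

theorem Δ_mul_σ (i : Fin (n - 1)) : Δ n * σ i = σ i.rev * Δ n :=
  isArtinFamily_σ.halfTwist_mul i

/-- The exponent sum of a braid, written multiplicatively. -/
def expSumHom (n : ℕ) : BraidGroup n →* Multiplicative ℤ :=
  lift (isArtinFamily_const (pathGraph (n - 1)) (Multiplicative.ofAdd 1))

/-- The exponent sum of a braid, that is, the sum of the exponents in any word in the generators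
representing it. -/
def expSum (x : BraidGroup n) : ℤ := (expSumHom n x).toAdd

theorem expSum_mul (x y : BraidGroup n) : expSum (x * y) = expSum x + expSum y := by
  simp [expSum]

theorem expSum_one : expSum (1 : BraidGroup n) = 0 := by
  simp [expSum]

theorem expSum_σ (i : Fin (n - 1)) : expSum (σ (n := n) i) = 1 :=
  congrArg Multiplicative.toAdd (lift_σ _ i)

theorem expSum_ofMonoid (y : BraidMonoid (n - 1)) : expSum (ofMonoid n y) = length y := by
  induction y using ArtinMonoid.induction_on with
  | one => rw [map_one, expSum_one, length_one, Nat.cast_zero]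
  | s_mul i y ih =>
    rw [map_mul, expSum_mul, ih, ofMonoid_s, expSum_σ, length_mul, length_s, Nat.cast_add,
      Nat.cast_one]

theorem IsPositive.expSum_pos {x : BraidGroup n} (hx : IsPositive x) (h : x ≠ 1) :
    0 < expSum x := by
  obtain ⟨y, rfl⟩ := isPositive_iff_exists_ofMonoid.1 hx
  rw [expSum_ofMonoid, Nat.cast_pos, Nat.pos_iff_ne_zero]
  exact fun hy => h (by rw [eq_one_of_length_eq_zero hy, map_one])

theorem IsPositive.exists_gcd {a b : BraidGroup n} (ha : IsPositive a) (hb : IsPositive b) :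
    ∃ d, IsPositive d ∧ ∀ c, IsPositive c → (LeftDvd c d ↔ LeftDvd c a ∧ LeftDvd c b) := by
  have hdvd (x y : BraidMonoid (n - 1)) : LeftDvd (ofMonoid n x) (ofMonoid n y) ↔ x ∣ y := by
    constructor
    · rintro ⟨p, hp, hxp⟩
      obtain ⟨z, rfl⟩ := isPositive_iff_exists_ofMonoid.1 hp
      exact ⟨z, ofMonoid_injective (by rw [map_mul, hxp])⟩
    · rintro ⟨z, rfl⟩
      exact ⟨ofMonoid n z, isPositive_iff_exists_ofMonoid.2 ⟨z, rfl⟩, (map_mul ..).symm⟩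
  obtain ⟨a, rfl⟩ := isPositive_iff_exists_ofMonoid.1 ha
  obtain ⟨b, rfl⟩ := isPositive_iff_exists_ofMonoid.1 hb
  obtain ⟨d, hd⟩ := ArtinMonoid.exists_gcd (BraidMonoid.cliqueFree_pathGraph (n - 1)) a b
  refine ⟨ofMonoid n d, isPositive_iff_exists_ofMonoid.2 ⟨d, rfl⟩, fun c hc => ?_⟩
  obtain ⟨c, rfl⟩ := isPositive_iff_exists_ofMonoid.1 hc
  rw [hdvd, hdvd, hdvd, hd]

theorem closure_range_σ (n : ℕ) : Subgroup.closure (Set.range (σ (n := n))) = ⊤ :=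
  PresentedGroup.closure_range_of _

theorem commute_Δ_sq (x : BraidGroup n) : Commute (Δ n ^ 2) x := by
  have hσ : Set.range (σ (n := n)) ⊆ Subgroup.centralizer {Δ n ^ 2} := by
    rintro _ ⟨i, rfl⟩
    refine Subgroup.mem_centralizer_singleton_iff.2 (Eq.symm ?_)
    rw [sq, mul_assoc, Δ_mul_σ, ← mul_assoc, Δ_mul_σ, Fin.rev_rev, mul_assoc]
  have hx : x ∈ Subgroup.closure (Set.range (σ (n := n))) := closure_range_σ n ▸ Subgroup.mem_top x
  exact (Subgroup.mem_centralizer_singleton_iff.1 ((Subgroup.closure_le _).2 hσ hx)).symm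

theorem exists_isPositive_Δ_sq_zpow_mul (x : BraidGroup n) :
    ∃ k : ℤ, IsPositive ((Δ n ^ 2) ^ k * x) := by
  have hx : x ∈ Subgroup.closure (Set.range (σ (n := n))) := closure_range_σ n ▸ Subgroup.mem_top x
  have hcomm (k : ℤ) (y : BraidGroup n) : (Δ n ^ 2) ^ k * y = y * (Δ n ^ 2) ^ k :=
    ((commute_Δ_sq y).zpow_left k).eq
  induction hx using Subgroup.closure_induction with
  | mem x h => exact ⟨0, by rw [zpow_zero, one_mul]; exact Submonoid.subset_closure h⟩
  | one => exact ⟨0, by rw [zpow_zero, one_mul]; exact one_mem (positives n)⟩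
  | mul x y _ _ hx hy =>
    obtain ⟨k, hk⟩ := hx
    obtain ⟨l, hl⟩ := hy
    refine ⟨k + l, ?_⟩
    have : (Δ n ^ 2) ^ (k + l) * (x * y) = ((Δ n ^ 2) ^ k * x) * ((Δ n ^ 2) ^ l * y) := by
      rw [zpow_add, mul_assoc, ← mul_assoc _ x y, hcomm l x]
      simp only [mul_assoc]
    rw [this]
    exact mul_mem (S := Submonoid (BraidGroup n)) hk hl
  | inv x _ hx =>
    obtain ⟨k, hk⟩ := hx
    obtain ⟨y, hy⟩ := isPositive_iff_exists_ofMonoid.1 hk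
    obtain ⟨r, z, hz⟩ := BraidMonoid.exists_dvd_delta_sq_pow y
    have hxz : (Δ n ^ 2) ^ k * x * ofMonoid n z = (Δ n ^ 2) ^ (r : ℤ) := by
      rw [← hy, ← map_mul, ← hz, map_pow, map_pow, ofMonoid_delta, zpow_natCast]
    refine ⟨r - k, isPositive_iff_exists_ofMonoid.2 ⟨z, ?_⟩⟩
    rw [hcomm, sub_eq_neg_add, zpow_add, ← hxz]
    group

end PositiveBraids

end BraidGroup

section Iterates

variable {A : Type*} {f g : A → A} {a : A}

theorem iterate_const_of_mem_periodicPts {B : Type*} [PartialOrder B] {φ : A → B}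
    (h : ∀ a, φ a ≤ φ (f a)) (ha : a ∈ Function.periodicPts f) (i : ℕ) : φ (f^[i] a) = φ a := by
  obtain ⟨M, hM, hfix⟩ := ha
  have hmono : Monotone fun i => φ (f^[i] a) :=
    monotone_nat_of_le_succ fun i => by rw [Function.iterate_succ_apply']; exact h _
  refine le_antisymm ?_ (hmono (Nat.zero_le i))
  calc φ (f^[i] a) ≤ φ (f^[M * i] a) := hmono (Nat.le_mul_of_pos_left i hM)
    _ = φ a := by rw [Function.iterate_mul, Function.iterate_fixed hfix]

theorem mem_periodicPts_of_leftInverse_on_orbit (h : ∀ i, g (f (f^[i] a)) = f^[i] a)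
    (ha : a ∈ Function.periodicPts f) : a ∈ Function.periodicPts g := by
  have hinv (i : ℕ) : g^[i] (f^[i] a) = a := by
    induction i with
    | zero => rfl
    | succ i ih =>
      rw [Function.iterate_succ_apply, Function.iterate_succ_apply' f, h, ih]
  obtain ⟨M, hM, hfix⟩ := ha
  have hg : g^[M] a = a := by simpa only [hfix.eq] using hinv M
  exact ⟨M, hM, hg⟩

theorem false_of_forall_exists_lt_of_forall_le {P : ℕ → A → Prop} {d : A → ℤ} {C : ℤ}
    (hC : ∀ i a, P i a → d a ≤ C) (hstep : ∀ i a, P i a → ∃ b, P (i + 1) b ∧ d a < d b)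
    (h : P 0 a) : False := by
  have key (i : ℕ) : ∃ b, P i b ∧ d a + i ≤ d b := by
    induction i with
    | zero => exact ⟨a, h, by simp⟩
    | succ i ih =>
      obtain ⟨b, hb, hab⟩ := ih
      obtain ⟨c, hc, hbc⟩ := hstep i b hb
      exact ⟨c, hc, by push_cast; omega⟩
  obtain ⟨b, hb, hab⟩ := key ((C - d a).toNat + 1)
  have := hC _ b hb
  push_cast at hab
  omega

theorem le_of_forall_nat_mul_le_mul_add {a b C : ℤ} (h : ∀ N : ℕ, N * a ≤ N * b + C) :
    a ≤ b := by
  by_contra! hlt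
  have := h (C.toNat + 1)
  push_cast at this
  nlinarith [C.self_le_toNat]

end Iterates

/-- A Garside group with Garside element `Δ`, ordered by left divisibility: `a ≤ b` means that
`a⁻¹ * b` lies in the Garside monoid `{x | 1 ≤ x}`. The additive function `deg` bounds the length
of chains of divisors and replaces the usual finiteness of the set of divisors of `Δ`. -/
class GarsideGroup (G : Type*) [Group G] [SemilatticeInf G] [MulLeftMono G] where
  Δ : G
  one_lt_Δ : 1 < Δ
  mul_Δ_le_mul_Δ {a b : G} : a * Δ ≤ b * Δ ↔ a ≤ b
  exists_Δ_zpow_le (x : G) : ∃ k : ℤ, Δ ^ k ≤ x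
  exists_commute_Δ_pow : ∃ m : ℕ, 0 < m ∧ ∀ x : G, Commute (Δ ^ m) x
  deg : G → ℤ
  deg_mul (x y : G) : deg (x * y) = deg x + deg y
  deg_pos {x : G} : 1 < x → 0 < deg x

namespace GarsideGroup

section Basic

variable {G : Type*} [Group G] [SemilatticeInf G] [MulLeftMono G]

theorem mul_inf (c a b : G) : c * (a ⊓ b) = c * a ⊓ c * b :=
  (OrderIso.mulLeft c).map_inf a b

variable [GarsideGroup G] {a b c x y z : G} {i j k : ℤ}

theorem deg_one : deg (1 : G) = 0 := by
  have := deg_mul (1 : G) 1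
  rw [mul_one] at this
  omega

theorem deg_inv (x : G) : deg x⁻¹ = -deg x := by
  have := deg_mul x x⁻¹
  rw [mul_inv_cancel, deg_one] at this
  omega

theorem deg_conj (a x : G) : deg (a⁻¹ * x * a) = deg x := by
  rw [deg_mul, deg_mul, deg_inv]
  ring

theorem deg_strictMono : StrictMono (deg : G → ℤ) := fun a b h => by
  have := deg_pos (show 1 < a⁻¹ * b by simpa using h)
  rw [deg_mul, deg_inv] at this
  omega

theorem eq_of_le_of_deg_le (h : a ≤ b) (hd : deg b ≤ deg a) : a = b :=
  h.eq_of_not_lt fun hlt => (deg_strictMono hlt).not_ge hd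

theorem mul_Δ_zpow_le_mul_Δ_zpow (k : ℤ) : a * Δ ^ k ≤ b * Δ ^ k ↔ a ≤ b := by
  induction k with
  | zero => simp
  | succ k ih => rw [zpow_add_one, ← mul_assoc, ← mul_assoc, mul_Δ_le_mul_Δ, ih]
  | pred k ih =>
    rw [← mul_Δ_le_mul_Δ, mul_assoc, mul_assoc, ← zpow_add_one, sub_add_cancel, ih]

theorem mul_Δ_zpow_le_iff (k : ℤ) : a * Δ ^ k ≤ b ↔ a ≤ b * Δ ^ (-k) := by
  rw [← mul_Δ_zpow_le_mul_Δ_zpow (-k), mul_assoc, ← zpow_add, add_neg_cancel, zpow_zero, mul_one]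

theorem le_mul_Δ_zpow_iff (k : ℤ) : a ≤ b * Δ ^ k ↔ a * Δ ^ (-k) ≤ b := by
  rw [mul_Δ_zpow_le_iff, neg_neg]

theorem inf_mul_Δ_zpow (a b : G) (k : ℤ) : (a ⊓ b) * Δ ^ k = a * Δ ^ k ⊓ b * Δ ^ k :=
  eq_of_forall_le_iff fun c => by
    simp only [le_inf_iff, le_mul_Δ_zpow_iff]

theorem Δ_zpow_strictMono : StrictMono fun k : ℤ => (Δ : G) ^ k :=
  strictMono_int_of_lt_succ fun k => by
    simp only [zpow_add_one]
    exact lt_mul_of_one_lt_right' _ one_lt_Δ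

theorem Δ_zpow_le_Δ_zpow : (Δ : G) ^ i ≤ Δ ^ j ↔ i ≤ j :=
  Δ_zpow_strictMono.le_iff_le

theorem le_mul_Δ_zpow (a : G) (hk : 0 ≤ k) : a ≤ a * Δ ^ k :=
  le_mul_of_one_le_right' <| by simpa using Δ_zpow_le_Δ_zpow (G := G).2 hk

theorem mul_le_Δ_zpow_add (ha : a ≤ Δ ^ i) (hb : b ≤ Δ ^ j) : a * b ≤ Δ ^ (i + j) := by
  rw [zpow_add]
  exact (mul_le_mul_right hb a).trans ((mul_Δ_zpow_le_mul_Δ_zpow j).2 ha)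

theorem Δ_le_mul_Δ (ha : 1 ≤ a) : Δ ≤ a * Δ := by
  simpa using mul_Δ_le_mul_Δ.2 ha

theorem exists_le_Δ_zpow (x : G) : ∃ k : ℤ, x ≤ Δ ^ k := by
  obtain ⟨k, hk⟩ := exists_Δ_zpow_le x⁻¹
  refine ⟨-k, ?_⟩
  rwa [← one_mul (Δ ^ (-k)), ← mul_Δ_zpow_le_iff, ← le_inv_mul_iff_mul_le, mul_one]

theorem le_inf_Δ_mul_Δ_zpow (h : c ≤ Δ ^ (k + 1)) (hk : 0 ≤ k) : c ≤ (c ⊓ Δ) * Δ ^ k := by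
  rw [inf_mul_Δ_zpow, ← zpow_one_add, add_comm]
  exact le_inf (le_mul_Δ_zpow c hk) h

theorem eq_one_of_inf_Δ_eq_one (ha : 1 ≤ a) (h : a ⊓ Δ = 1) : a = 1 := by
  have key (k : ℕ) : a ⊓ Δ ^ (k : ℤ) = 1 := by
    refine le_antisymm ?_ (le_inf ha (by simpa using Δ_zpow_le_Δ_zpow (G := G).2 k.cast_nonneg))
    induction k with
    | zero => simp
    | succ k ih =>
      refine le_trans (le_inf inf_le_left ?_) ih
      calc a ⊓ Δ ^ ((k + 1 : ℕ) : ℤ)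
          ≤ (a ⊓ Δ ^ ((k + 1 : ℕ) : ℤ) ⊓ Δ) * Δ ^ (k : ℤ) :=
            le_inf_Δ_mul_Δ_zpow inf_le_right k.cast_nonneg
        _ ≤ 1 * Δ ^ (k : ℤ) := (mul_Δ_zpow_le_mul_Δ_zpow _).2 <|
            (inf_le_inf_right _ inf_le_left).trans h.le
        _ = Δ ^ (k : ℤ) := one_mul _
  obtain ⟨k, hk⟩ := exists_le_Δ_zpow a
  rw [← key k.toNat]
  exact (inf_eq_left.2 (hk.trans (Δ_zpow_le_Δ_zpow.2 k.self_le_toNat))).symm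

end Basic

section InfimumSupremum

variable {G : Type*} [Group G] [SemilatticeInf G] [MulLeftMono G] [GarsideGroup G]
  {a b c x y z : G} {k r : ℤ}

/-- The infimum of `x`: the largest `k` with `Δ ^ k ≤ x`. -/
noncomputable def infimum (x : G) : ℤ := sSup {k | Δ ^ k ≤ x}

/-- The supremum of `x`: the smallest `k` with `x ≤ Δ ^ k`. -/
noncomputable def supremum (x : G) : ℤ := sInf {k | x ≤ Δ ^ k}

theorem le_infimum_iff : k ≤ infimum x ↔ Δ ^ k ≤ x := by
  obtain ⟨l, hl⟩ := exists_le_Δ_zpow x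
  have hbdd : BddAbove {k : ℤ | Δ ^ k ≤ x} :=
    ⟨l, fun _ hk => Δ_zpow_le_Δ_zpow.1 (le_trans hk hl)⟩
  exact ⟨fun h => (Δ_zpow_le_Δ_zpow.2 h).trans (Int.csSup_mem (exists_Δ_zpow_le x) hbdd),
    fun h => le_csSup hbdd h⟩

theorem supremum_le_iff : supremum x ≤ k ↔ x ≤ Δ ^ k := by
  obtain ⟨l, hl⟩ := exists_Δ_zpow_le x
  have hbdd : BddBelow {k : ℤ | x ≤ Δ ^ k} :=
    ⟨l, fun _ hk => Δ_zpow_le_Δ_zpow.1 (le_trans hl hk)⟩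
  exact ⟨fun h => le_trans (Int.csInf_mem (exists_le_Δ_zpow x) hbdd) (Δ_zpow_le_Δ_zpow.2 h),
    fun h => csInf_le hbdd h⟩

theorem Δ_zpow_infimum_le (x : G) : Δ ^ infimum x ≤ x := le_infimum_iff.1 le_rfl

theorem le_Δ_zpow_supremum (x : G) : x ≤ Δ ^ supremum x := supremum_le_iff.1 le_rfl

theorem infimum_le_supremum (x : G) : infimum x ≤ supremum x :=
  Δ_zpow_le_Δ_zpow.1 ((Δ_zpow_infimum_le x).trans (le_Δ_zpow_supremum x))

theorem eq_Δ_zpow_of_infimum_eq_supremum (h : infimum x = supremum x) : x = Δ ^ infimum x :=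
  le_antisymm (h ▸ le_Δ_zpow_supremum x) (Δ_zpow_infimum_le x)

theorem exists_conjugator (h : IsConj y z) :
    ∃ (a : G) (r : ℤ), 1 ≤ a ∧ a ≤ Δ ^ r ∧ a⁻¹ * y * a = z := by
  obtain ⟨c, rfl⟩ := isConj_iff.1 h
  obtain ⟨m, hm, hcomm⟩ := exists_commute_Δ_pow (G := G)
  obtain ⟨k, hk⟩ := exists_Δ_zpow_le c⁻¹
  obtain ⟨d, hdc, hdy⟩ : ∃ d : G, d ≤ c⁻¹ ∧ d * y = y * d := by
    refine ⟨(Δ ^ m) ^ (-|k|), le_trans ?_ hk, ((hcomm y).zpow_left _).eq⟩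
    rw [← zpow_natCast, ← zpow_mul, Δ_zpow_le_Δ_zpow]
    nlinarith [neg_abs_le k, abs_nonneg k]
  obtain ⟨r, hr⟩ := exists_le_Δ_zpow (d⁻¹ * c⁻¹)
  refine ⟨d⁻¹ * c⁻¹, r, by simpa using hdc, hr, ?_⟩
  calc (d⁻¹ * c⁻¹)⁻¹ * y * (d⁻¹ * c⁻¹) = c * (d * y) * d⁻¹ * c⁻¹ := by group
    _ = c * y * c⁻¹ := by rw [hdy]; group

end InfimumSupremum

section Cycling

variable {G : Type*} [Group G] [SemilatticeInf G] [MulLeftMono G] [GarsideGroup G]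
  {a c x y z : G} {k r : ℤ}

/-- The initial factor of `x = Δ ^ u * y₁ ⋯ yₖ` (left normal form), namely
`Δ ^ u * y₁ * Δ ^ (-u)`, defined without reference to the normal form. -/
noncomputable def initialFactor (x : G) : G := x * Δ ^ (-infimum x) ⊓ Δ

/-- The element `Δ ^ u * y₁ ⋯ yₖ₋₁` obtained from `x = Δ ^ u * y₁ ⋯ yₖ` (left normal form) by
deleting the last factor. -/
noncomputable def stem (x : G) : G := x ⊓ Δ ^ (supremum x - 1)

/-- The final factor `yₖ` of `x = Δ ^ u * y₁ ⋯ yₖ` (left normal form); it is `Δ` when `k = 0`. -/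
noncomputable def finalFactor (x : G) : G := (stem x)⁻¹ * x

/-- Cycling moves the initial factor of `x` to its end. -/
noncomputable def cycling (x : G) : G := (initialFactor x)⁻¹ * x * initialFactor x

/-- Decycling moves the final factor of `x` to its beginning. -/
noncomputable def decycling (x : G) : G := finalFactor x * x * (finalFactor x)⁻¹

theorem one_le_initialFactor (x : G) : 1 ≤ initialFactor x := by
  refine le_inf ?_ one_lt_Δ.le
  rw [← mul_Δ_zpow_le_iff, one_mul]
  exact Δ_zpow_infimum_le x

theorem initialFactor_le_Δ (x : G) : initialFactor x ≤ Δ := inf_le_right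

theorem initialFactor_mul_Δ_zpow_le (x : G) : initialFactor x * Δ ^ infimum x ≤ x :=
  (mul_Δ_zpow_le_iff _).2 inf_le_left

theorem initialFactor_lt_Δ (x : G) : initialFactor x < Δ := by
  refine (initialFactor_le_Δ x).lt_of_ne fun h => ?_
  have hle := initialFactor_mul_Δ_zpow_le x
  rw [h, ← zpow_one_add, ← le_infimum_iff] at hle
  omega

theorem le_initialFactor_mul_Δ_zpow (hx : c ≤ x * Δ ^ (k - infimum x)) (hk : c ≤ Δ ^ (k + 1)) :
    c ≤ initialFactor x * Δ ^ k := by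
  rw [initialFactor, inf_mul_Δ_zpow, mul_assoc, ← zpow_add, ← zpow_one_add, neg_add_eq_sub,
    add_comm 1]
  exact le_inf hx hk

theorem le_initialFactor_mul_Δ_zpow_of_lt (h : infimum x < supremum x) :
    x ≤ initialFactor x * Δ ^ (supremum x - 1) := by
  refine le_initialFactor_mul_Δ_zpow (le_mul_Δ_zpow x (by omega)) ?_
  rw [sub_add_cancel]
  exact le_Δ_zpow_supremum x

theorem stem_le (x : G) : stem x ≤ x := inf_le_left

theorem stem_le_Δ_zpow (x : G) : stem x ≤ Δ ^ (supremum x - 1) := inf_le_right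

theorem le_stem_mul_Δ_zpow (hx : c ≤ x * Δ ^ k) (hk : c ≤ Δ ^ (supremum x - 1 + k)) :
    c ≤ stem x * Δ ^ k := by
  rw [stem, inf_mul_Δ_zpow, ← zpow_add]
  exact le_inf hx hk

theorem one_lt_finalFactor (x : G) : 1 < finalFactor x := by
  have hlt : stem x < x := (stem_le x).lt_of_ne fun h => by
    have hle := stem_le_Δ_zpow x
    rw [h, ← supremum_le_iff] at hle
    omega
  simpa [finalFactor] using hlt

theorem finalFactor_le_Δ (x : G) : finalFactor x ≤ Δ := by
  rw [finalFactor, inv_mul_le_iff_le_mul, ← zpow_one Δ]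
  refine le_stem_mul_Δ_zpow (le_mul_Δ_zpow x zero_le_one) ?_
  rw [sub_add_cancel]
  exact le_Δ_zpow_supremum x

theorem decycling_eq (x : G) : decycling x = finalFactor x * stem x := by
  simp [decycling, finalFactor, mul_assoc]

theorem infimum_le_cycling (x : G) : infimum x ≤ infimum (cycling x) := by
  rw [le_infimum_iff, cycling, mul_assoc, le_inv_mul_iff_mul_le]
  exact (initialFactor_mul_Δ_zpow_le x).trans (le_mul_of_one_le_right' (one_le_initialFactor x))

theorem initialFactor_eq_one_of_infimum_eq_supremum (h : infimum x = supremum x) :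
    initialFactor x = 1 := by
  refine le_antisymm (inf_le_left.trans ?_) (one_le_initialFactor x)
  rw [mul_Δ_zpow_le_iff, neg_neg, one_mul, h]
  exact le_Δ_zpow_supremum x

theorem cycling_eq_self_of_infimum_eq_supremum (h : infimum x = supremum x) : cycling x = x := by
  simp [cycling, initialFactor_eq_one_of_infimum_eq_supremum h]

theorem supremum_cycling_le (x : G) : supremum (cycling x) ≤ supremum x := by
  rcases (infimum_le_supremum x).eq_or_lt with h | h
  · rw [cycling_eq_self_of_infimum_eq_supremum h]
  · rw [supremum_le_iff, cycling]
    have hx : (initialFactor x)⁻¹ * x ≤ Δ ^ (supremum x - 1) :=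
      inv_mul_le_iff_le_mul.2 (le_initialFactor_mul_Δ_zpow_of_lt h)
    simpa using mul_le_Δ_zpow_add (j := 1) hx (by simpa using initialFactor_le_Δ x)

theorem supremum_decycling_le (x : G) : supremum (decycling x) ≤ supremum x := by
  rw [supremum_le_iff, decycling_eq]
  simpa using
    mul_le_Δ_zpow_add (i := 1) (by simpa using finalFactor_le_Δ x) (stem_le_Δ_zpow x)

theorem exists_conjugator_cycling (ha : 1 ≤ a) (har : a ≤ Δ ^ r)
    (h : Δ ^ (infimum y + 1) ≤ a⁻¹ * y * a) :
    ∃ b : G, (1 ≤ b ∧ b ≤ Δ ^ r ∧ Δ ^ (infimum y + 1) ≤ b⁻¹ * cycling y * b) ∧ deg a < deg b := by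
  refine ⟨(initialFactor y)⁻¹ * (a * Δ), ⟨?_, ?_, ?_⟩, ?_⟩
  · rw [le_inv_mul_iff_mul_le, mul_one]
    exact (initialFactor_le_Δ y).trans (Δ_le_mul_Δ ha)
  · refine inv_mul_le_iff_le_mul.2 (le_initialFactor_mul_Δ_zpow ?_ ?_)
    · rw [mul_assoc, le_inv_mul_iff_mul_le] at h
      rw [sub_eq_add_neg, zpow_add, ← mul_assoc, ← mul_Δ_zpow_le_iff, mul_assoc, ← zpow_one_add,
        add_comm]
      exact h.trans (mul_le_mul_right har y)
    · exact mul_le_Δ_zpow_add har (zpow_one Δ).ge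
  · calc Δ ^ (infimum y + 1) = Δ⁻¹ * (Δ ^ (infimum y + 1) * Δ) := by group
      _ ≤ Δ⁻¹ * (a⁻¹ * y * a * Δ) := mul_le_mul_right (mul_Δ_le_mul_Δ.2 h) _
      _ = _ := by rw [cycling]; group
  · have := deg_strictMono (initialFactor_lt_Δ y)
    rw [deg_mul, deg_mul, deg_inv]
    omega

theorem exists_conjugator_decycling (ha : 1 ≤ a) (har : a ≤ Δ ^ r)
    (h : a⁻¹ * y * a ≤ Δ ^ (supremum y - 1)) :
    ∃ b : G, (1 ≤ b ∧ b ≤ Δ ^ r ∧ b⁻¹ * decycling y * b ≤ Δ ^ (supremum y - 1)) ∧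
      deg a < deg b := by
  refine ⟨finalFactor y * a, ⟨one_le_mul (one_lt_finalFactor y).le ha, ?_, ?_⟩, ?_⟩
  · rw [finalFactor, mul_assoc, inv_mul_le_iff_le_mul]
    refine le_stem_mul_Δ_zpow (mul_le_mul_right har y) ?_
    rw [mul_assoc, inv_mul_le_iff_le_mul] at h
    rw [add_comm]
    exact h.trans (mul_le_Δ_zpow_add har le_rfl)
  · convert h using 1
    rw [decycling]
    group
  · have := deg_pos (one_lt_finalFactor y)
    rw [deg_mul]
    omega

/-- Iterated cycling never increases the infimum of `x`; this is how membership in the summit set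
is detected. -/
def IsCyclingStable (x : G) : Prop := ∀ i, infimum (cycling^[i] x) = infimum x

theorem IsCyclingStable.iterate (h : IsCyclingStable x) (i : ℕ) :
    IsCyclingStable (cycling^[i] x) := fun j => by
  rw [← Function.iterate_add_apply, h, h]

theorem isCyclingStable_of_mem_periodicPts (h : x ∈ Function.periodicPts cycling) :
    IsCyclingStable x :=
  iterate_const_of_mem_periodicPts infimum_le_cycling h

theorem IsCyclingStable.infimum_le_of_isConj (h : IsCyclingStable y) (hyz : IsConj y z) :
    infimum z ≤ infimum y := by
  by_contra! hlt
  obtain ⟨a, r, ha, har, rfl⟩ := exists_conjugator hyz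
  refine false_of_forall_exists_lt_of_forall_le (C := deg (Δ ^ r : G)) (d := deg) (a := a)
    (P := fun i b => 1 ≤ b ∧ b ≤ Δ ^ r ∧ Δ ^ (infimum y + 1) ≤ b⁻¹ * cycling^[i] y * b)
    (fun i b hb => deg_strictMono.monotone hb.2.1) ?_ ⟨ha, har, le_infimum_iff.1 hlt⟩
  rintro i b ⟨hb, hbr, hbi⟩
  rw [← h i] at hbi ⊢
  simpa only [Function.iterate_succ_apply'] using exists_conjugator_cycling hb hbr hbi

theorem supremum_le_of_isConj (h : y ∈ Function.periodicPts decycling) (hyz : IsConj y z) :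
    supremum y ≤ supremum z := by
  have hsup (i : ℕ) : supremum (decycling^[i] y) = supremum y :=
    iterate_const_of_mem_periodicPts (φ := fun x => OrderDual.toDual (supremum x))
      supremum_decycling_le h i
  by_contra! hlt
  obtain ⟨a, r, ha, har, rfl⟩ := exists_conjugator hyz
  refine false_of_forall_exists_lt_of_forall_le (C := deg (Δ ^ r : G)) (d := deg) (a := a)
    (P := fun i b => 1 ≤ b ∧ b ≤ Δ ^ r ∧ b⁻¹ * decycling^[i] y * b ≤ Δ ^ (supremum y - 1))
    (fun i b hb => deg_strictMono.monotone hb.2.1) ?_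
    ⟨ha, har, supremum_le_iff.1 (Int.le_sub_one_of_lt hlt)⟩
  rintro i b ⟨hb, hbr, hbi⟩
  rw [← hsup i] at hbi ⊢
  simpa only [Function.iterate_succ_apply'] using exists_conjugator_decycling hb hbr hbi

end Cycling

section SummitSets

variable {G : Type*} [Group G] [SemilatticeInf G] [MulLeftMono G] [GarsideGroup G]

/-- The summit set: the conjugates of `x` with maximal infimum. -/
def summitSet (x : G) : Set G := {y | IsConj x y ∧ ∀ z, IsConj x z → infimum z ≤ infimum y}

/-- The super summit set: the elements of the summit set with minimal supremum among the
conjugates of `x`. -/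
def superSummitSet (x : G) : Set G :=
  {y ∈ summitSet x | ∀ z, IsConj x z → supremum y ≤ supremum z}

/-- The ultra summit set: the elements of the super summit set which are periodic under
cycling. -/
def ultraSummitSet (x : G) : Set G := superSummitSet x ∩ Function.periodicPts cycling

/-- The reduced super summit set: the conjugates of `x` which are periodic under both cycling and
decycling. -/
def reducedSuperSummitSet (x : G) : Set G :=
  {y | IsConj x y ∧ y ∈ Function.periodicPts cycling ∧ y ∈ Function.periodicPts decycling}

theorem superSummitSet_subset_summitSet (x : G) : superSummitSet x ⊆ summitSet x :=
  Set.sep_subset _ _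

theorem ultraSummitSet_subset_superSummitSet (x : G) : ultraSummitSet x ⊆ superSummitSet x :=
  Set.inter_subset_left

theorem reducedSuperSummitSet_subset_ultraSummitSet (x : G) :
    reducedSuperSummitSet x ⊆ ultraSummitSet x := by
  rintro y ⟨hxy, hc, hd⟩
  refine ⟨⟨⟨hxy, fun z hxz => ?_⟩, fun z hxz => ?_⟩, hc⟩
  · exact (isCyclingStable_of_mem_periodicPts hc).infimum_le_of_isConj (hxy.symm.trans hxz)
  · exact supremum_le_of_isConj hd (hxy.symm.trans hxz)

end SummitSets

section NormalForm

variable {G : Type*} [Group G] [SemilatticeInf G] [MulLeftMono G] [GarsideGroup G]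
  {a b c x : G} {L : List G} {u : ℤ}

/-- The pair of factors `a`, `b` of `a * b` is left weighted: as much as possible of the product
has been moved into its first factor. -/
def LeftWeighted (a b : G) : Prop := a * b ⊓ Δ = a

theorem leftWeighted_iff_inf_eq_one : LeftWeighted a b ↔ a⁻¹ * Δ ⊓ b = 1 := by
  rw [LeftWeighted, inf_comm (a⁻¹ * Δ), ← mul_right_inj a (b := b ⊓ _), mul_inf,
    mul_inv_cancel_left, mul_one]

theorem mul_inf_Δ (ha : 1 ≤ a) : a * b ⊓ Δ = a * (b ⊓ Δ) ⊓ Δ := by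
  rw [mul_inf, inf_assoc, inf_eq_right.2 (Δ_le_mul_Δ ha)]

/-- The left normal form `x = Δ ^ u * y₁ ⋯ yₖ`, where `L = [y₁, …, yₖ]`. -/
structure IsNormalForm (u : ℤ) (L : List G) (x : G) : Prop where
  mem_Ioo : ∀ a ∈ L, a ∈ Set.Ioo 1 Δ
  isChain : L.IsChain LeftWeighted
  eq : x = Δ ^ u * L.prod

theorem prod_le_Δ_pow (hL : ∀ a ∈ L, a ≤ Δ) : L.prod ≤ Δ ^ (L.length : ℤ) := by
  induction L with
  | nil => simp
  | cons a L ih =>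
    rw [List.prod_cons, List.length_cons, Nat.cast_succ, add_comm]
    rw [List.forall_mem_cons] at hL
    exact mul_le_Δ_zpow_add (by simpa using hL.1) (ih hL.2)

theorem prod_inf_Δ (hL : ∀ a ∈ L, a ∈ Set.Icc 1 Δ) (hchain : L.IsChain LeftWeighted) :
    L.prod ⊓ Δ = L.headD 1 := by
  induction L with
  | nil => exact inf_eq_left.2 one_lt_Δ.le
  | cons a L ih =>
    rw [List.forall_mem_cons] at hL
    rw [List.prod_cons, mul_inf_Δ hL.1.1, ih hL.2 hchain.tail]
    cases L with
    | nil => simpa using hL.1.2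
    | cons b L => exact (List.isChain_cons_cons.1 hchain).1

theorem prod_inf_Δ_pow (hL : ∀ a ∈ L, a ∈ Set.Icc 1 Δ) (hchain : L.IsChain LeftWeighted)
    (j : ℕ) : L.prod ⊓ Δ ^ (j : ℤ) = (L.take j).prod := by
  have htake : ∀ a ∈ L.take j, a ≤ Δ := fun a ha => (hL a (List.mem_of_mem_take ha)).2
  refine le_antisymm ?_ (le_inf ?_ ?_)
  · clear htake
    induction j generalizing L with
    | zero => simp
    | succ j ih =>
      cases L with
      | nil => simp
      | cons a L =>
        have hhead := prod_inf_Δ hL hchain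
        rw [List.forall_mem_cons] at hL
        rw [List.take_succ_cons, List.prod_cons, List.prod_cons, ← inv_mul_le_iff_le_mul,
          Nat.cast_succ]
        refine le_trans (le_inf ?_ ?_) (ih hL.2 hchain.tail)
        · exact inv_mul_le_iff_le_mul.2 inf_le_left
        · refine inv_mul_le_iff_le_mul.2 ((le_inf_Δ_mul_Δ_zpow inf_le_right j.cast_nonneg).trans ?_)
          rw [mul_Δ_zpow_le_mul_Δ_zpow]
          exact (inf_le_inf_right _ inf_le_left).trans hhead.le
  · rw [← L.prod_take_mul_prod_drop j]
    exact le_mul_of_one_le_right' <|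
      List.one_le_prod_of_one_le fun a ha => (hL a (List.mem_of_mem_drop ha)).1
  · refine (prod_le_Δ_pow htake).trans (Δ_zpow_le_Δ_zpow.2 ?_)
    exact_mod_cast L.length_take_le j

theorem exists_isNormalForm_zero (hx : 1 ≤ x) (hΔ : ¬Δ ≤ x) : ∃ L, IsNormalForm 0 L x := by
  induction hd : (deg x).toNat using Nat.strong_induction_on generalizing x with
  | _ d ih =>
    subst hd
    rcases hx.eq_or_lt with rfl | hx1
    · exact ⟨[], by simp, List.isChain_nil, by simp⟩
    have ha : 1 < x ⊓ Δ := (le_inf hx one_lt_Δ.le).lt_of_ne fun h =>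
      hx1.ne' (eq_one_of_inf_Δ_eq_one hx h.symm)
    have hy : 1 ≤ (x ⊓ Δ)⁻¹ * x := by simp
    have hyΔ : ¬Δ ≤ (x ⊓ Δ)⁻¹ * x := fun h =>
      hΔ ((Δ_le_mul_Δ ha.le).trans (le_inv_mul_iff_mul_le.1 h))
    have hdeg : (deg ((x ⊓ Δ)⁻¹ * x)).toNat < (deg x).toNat := by
      have := deg_pos ha
      have := deg_pos hx1
      rw [deg_mul, deg_inv]
      omega
    obtain ⟨L, hL⟩ := ih _ hdeg hy hyΔ rfl
    refine ⟨(x ⊓ Δ) :: L, List.forall_mem_cons.2 ⟨⟨ha, inf_lt_right.2 hΔ⟩, hL.mem_Ioo⟩,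
      List.isChain_cons.2 ⟨fun b hb => ?_, hL.isChain⟩, ?_⟩
    · have hb1 : 1 ≤ b := (hL.mem_Ioo b (List.mem_of_mem_head? hb)).1.le
      have hbx : b ≤ (x ⊓ Δ)⁻¹ * x := by
        obtain ⟨L', rfl⟩ := List.head?_eq_some_iff.1 hb
        rw [hL.eq, zpow_zero, one_mul, List.prod_cons]
        exact le_mul_of_one_le_right' <| List.one_le_prod_of_one_le fun c hc =>
          (hL.mem_Ioo c (List.mem_cons_of_mem _ hc)).1.le
      exact le_antisymm (inf_le_inf_right _ (le_inv_mul_iff_mul_le.1 hbx))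
        (le_inf (le_mul_of_one_le_right' hb1) inf_le_right)
    · have hprod := hL.eq
      rw [zpow_zero, one_mul] at hprod ⊢
      rw [List.prod_cons, ← hprod, mul_inv_cancel_left]

theorem exists_isNormalForm (x : G) : ∃ u L, IsNormalForm u L x := by
  have hone : 1 ≤ (Δ ^ infimum x)⁻¹ * x := by
    simpa using Δ_zpow_infimum_le x
  have hΔ : ¬Δ ≤ (Δ ^ infimum x)⁻¹ * x := fun h => by
    rw [le_inv_mul_iff_mul_le, ← zpow_add_one, ← le_infimum_iff] at h
    omega
  obtain ⟨L, hL⟩ := exists_isNormalForm_zero hone hΔ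
  refine ⟨infimum x, L, hL.mem_Ioo, hL.isChain, ?_⟩
  have hprod := hL.eq
  rw [zpow_zero, one_mul] at hprod
  rw [← hprod, mul_inv_cancel_left]

namespace IsNormalForm

theorem mem_Icc (h : IsNormalForm u L x) : ∀ a ∈ L, a ∈ Set.Icc 1 Δ :=
  fun a ha => Set.Ioo_subset_Icc_self (h.mem_Ioo a ha)

theorem infimum_eq (h : IsNormalForm u L x) : infimum x = u := by
  refine le_antisymm ?_ (le_infimum_iff.2 ?_)
  · by_contra! hlt
    have hprod : Δ ≤ L.prod := by
      have hle := le_infimum_iff.1 (Int.add_one_le_of_lt hlt)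
      rwa [h.eq, zpow_add_one, mul_le_mul_iff_left] at hle
    have hhead := prod_inf_Δ h.mem_Icc h.isChain
    rw [inf_eq_right.2 hprod] at hhead
    cases L with
    | nil => exact one_lt_Δ.ne' hhead
    | cons a L => exact (h.mem_Ioo a List.mem_cons_self).2.ne' hhead
  · rw [h.eq]
    exact le_mul_of_one_le_right' (List.one_le_prod_of_one_le fun a ha => (h.mem_Ioo a ha).1.le)

theorem supremum_eq (h : IsNormalForm u L x) : supremum x = u + L.length := by
  refine le_antisymm (supremum_le_iff.2 ?_) ?_
  · rw [h.eq, zpow_add, mul_le_mul_iff_left]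
    exact prod_le_Δ_pow fun a ha => (h.mem_Ioo a ha).2.le
  · rcases L.eq_nil_or_concat' with rfl | ⟨L, b, rfl⟩
    · simpa [h.infimum_eq] using infimum_le_supremum x
    by_contra! hlt
    have hprod : (L ++ [b]).prod ≤ Δ ^ (L.length : ℤ) := by
      rw [List.length_append, List.length_singleton] at hlt
      have hle := supremum_le_iff.1 (show supremum x ≤ u + L.length by push_cast at hlt; omega)
      rwa [h.eq, zpow_add, mul_le_mul_iff_left] at hle
    have htake := prod_inf_Δ_pow h.mem_Icc h.isChain L.length
    rw [inf_eq_left.2 hprod, List.take_left, List.prod_append, List.prod_singleton,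
      mul_eq_left] at htake
    exact (h.mem_Ioo b (by simp)).1.ne' htake

theorem finalFactor_eq {b : G} (h : IsNormalForm u (L ++ [b]) x) : finalFactor x = b := by
  have hstem : stem x = Δ ^ u * L.prod := by
    rw [stem, h.supremum_eq, List.length_append, List.length_singleton, Nat.cast_succ,
      add_sub_assoc, add_sub_cancel_right, zpow_add, h.eq, ← mul_inf,
      prod_inf_Δ_pow h.mem_Icc h.isChain, List.take_left]
  rw [finalFactor, hstem, h.eq, List.prod_append, List.prod_singleton, mul_inv_rev, mul_assoc,
    inv_mul_cancel_left, inv_mul_cancel_left]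

end IsNormalForm

end NormalForm

section Twist

variable {G : Type*} [Group G] [SemilatticeInf G] [MulLeftMono G] [GarsideGroup G]
  {a b x : G} {L : List G}

/-- Conjugation by `Δ ^ u`, the automorphism needed to move factors past a power of `Δ`. -/
def twist (u : ℤ) : G ≃* G := MulAut.conj (Δ ^ u)

theorem twist_apply (u : ℤ) (a : G) : twist u a = Δ ^ u * a * Δ ^ (-u) := by
  rw [twist, MulAut.conj_apply, zpow_neg]

theorem twist_Δ (u : ℤ) : twist u (Δ : G) = Δ := by
  rw [twist_apply]
  group

theorem twist_inf (u : ℤ) (a b : G) : twist u (a ⊓ b) = twist u a ⊓ twist u b := by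
  simp only [twist_apply, mul_inf, inf_mul_Δ_zpow]

theorem twist_lt_twist (u : ℤ) : twist u a < twist u b ↔ a < b := by
  simp only [lt_iff_le_and_ne, twist_apply, mul_Δ_zpow_le_mul_Δ_zpow, mul_le_mul_iff_left, ne_eq,
    mul_left_inj, mul_right_inj]

theorem twist_mem_Ioo (u : ℤ) (ha : a ∈ Set.Ioo 1 Δ) : twist u a ∈ Set.Ioo 1 Δ := by
  have h1 := (twist_lt_twist u).2 ha.1
  have h2 := (twist_lt_twist u).2 ha.2
  rw [map_one] at h1
  rw [twist_Δ] at h2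
  exact ⟨h1, h2⟩

theorem LeftWeighted.map_twist (u : ℤ) (h : LeftWeighted a b) :
    LeftWeighted (twist u a) (twist u b) := by
  rw [LeftWeighted, ← map_mul, ← twist_Δ u, ← twist_inf, h]

theorem IsNormalForm.initialFactor_eq {u : ℤ} (h : IsNormalForm u L x) :
    initialFactor x = twist u (L.headD 1) := by
  rw [← prod_inf_Δ h.mem_Icc h.isChain, twist_inf, twist_Δ, twist_apply, initialFactor,
    h.infimum_eq, h.eq]

end Twist

section IteratedCycling

variable {G : Type*} [Group G] [SemilatticeInf G] [MulLeftMono G] [GarsideGroup G]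
  {a x y : G} {k : ℕ} {r : ℤ}

/-- The product of the first `m` initial factors met when cycling `x`; it conjugates `x` to its
`m`-th cycling. -/
noncomputable def cyclingProd : ℕ → G → G
  | 0, _ => 1
  | m + 1, x => initialFactor x * cyclingProd m (cycling x)

theorem cyclingProd_add (i j : ℕ) (x : G) :
    cyclingProd (i + j) x = cyclingProd i x * cyclingProd j (cycling^[i] x) := by
  induction i generalizing x with
  | zero => simp [cyclingProd]
  | succ i ih =>
    rw [Nat.add_right_comm, cyclingProd, ih, cyclingProd, mul_assoc, Function.iterate_succ_apply]

theorem cyclingProd_succ (m : ℕ) (x : G) :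
    cyclingProd (m + 1) x = cyclingProd m x * initialFactor (cycling^[m] x) := by
  rw [cyclingProd_add, cyclingProd, cyclingProd, mul_one]

theorem one_le_cyclingProd (m : ℕ) (x : G) : 1 ≤ cyclingProd m x := by
  induction m generalizing x with
  | zero => exact le_rfl
  | succ m ih => exact one_le_mul (one_le_initialFactor x) (ih _)

theorem cyclingProd_mono {i j : ℕ} (h : i ≤ j) (x : G) : cyclingProd i x ≤ cyclingProd j x := by
  obtain ⟨k, rfl⟩ := Nat.exists_eq_add_of_le h
  rw [cyclingProd_add]
  exact le_mul_of_one_le_right' (one_le_cyclingProd _ _)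

theorem cyclingProd_le_Δ_zpow (m : ℕ) (x : G) : cyclingProd m x ≤ Δ ^ (m : ℤ) := by
  induction m generalizing x with
  | zero => simp [cyclingProd]
  | succ m ih =>
    rw [Nat.cast_succ, add_comm (m : ℤ)]
    exact mul_le_Δ_zpow_add (i := 1) (by simpa using initialFactor_le_Δ x) (ih _)

theorem cycling_iterate (m : ℕ) (x : G) :
    cycling^[m] x = (cyclingProd m x)⁻¹ * x * cyclingProd m x := by
  induction m generalizing x with
  | zero => simp [cyclingProd]
  | succ m ih =>
    rw [Function.iterate_succ_apply, ih, cyclingProd, cycling]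
    group

theorem isConj_cycling_iterate (m : ℕ) (x : G) : IsConj x (cycling^[m] x) := by
  rw [cycling_iterate, isConj_iff]
  exact ⟨(cyclingProd m x)⁻¹, by rw [inv_inv]⟩

theorem deg_eq_of_isConj (h : IsConj x y) : deg x = deg y := by
  obtain ⟨a, -, -, -, rfl⟩ := exists_conjugator h
  rw [deg_conj]

theorem supremum_cycling_iterate_le (i : ℕ) (x : G) : supremum (cycling^[i] x) ≤ supremum x := by
  induction i with
  | zero => exact le_rfl
  | succ i ih =>
    rw [Function.iterate_succ_apply']
    exact (supremum_cycling_le _).trans ih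

theorem one_le_transport_and_transport_le (hinf : infimum x = infimum y) (ha : 1 ≤ a)
    (har : a ≤ Δ ^ r) (hxy : a⁻¹ * x * a = y) :
    1 ≤ (initialFactor x)⁻¹ * (a * initialFactor y) ∧
      (initialFactor x)⁻¹ * (a * initialFactor y) ≤ Δ ^ r := by
  have hay : a * y = x * a := by
    rw [← hxy]
    group
  constructor
  · rw [le_inv_mul_iff_mul_le, mul_one, initialFactor, initialFactor, mul_inf, ← mul_assoc, hay,
      hinf]
    exact inf_le_inf ((mul_Δ_zpow_le_mul_Δ_zpow _).2 (le_mul_of_one_le_right' ha)) (Δ_le_mul_Δ ha)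
  · refine inv_mul_le_iff_le_mul.2 (le_initialFactor_mul_Δ_zpow ?_ ?_)
    · calc a * initialFactor y ≤ a * (y * Δ ^ (-infimum y)) := mul_le_mul_right inf_le_left a
        _ = x * a * Δ ^ (-infimum x) := by rw [← mul_assoc, hay, hinf]
        _ ≤ x * Δ ^ r * Δ ^ (-infimum x) :=
          (mul_Δ_zpow_le_mul_Δ_zpow _).2 (mul_le_mul_right har x)
        _ = x * Δ ^ (r - infimum x) := by rw [mul_assoc, ← zpow_add, sub_eq_add_neg]
    · exact mul_le_Δ_zpow_add har (by simpa using initialFactor_le_Δ y)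

theorem exists_deg_cyclingProd_le_add (hx : IsCyclingStable x) (hy : IsCyclingStable y)
    (hxy : IsConj x y) :
    ∃ C : ℤ, ∀ m, deg (cyclingProd m y) ≤ deg (cyclingProd m x) + C := by
  have hinf : infimum x = infimum y :=
    le_antisymm (hy.infimum_le_of_isConj hxy.symm) (hx.infimum_le_of_isConj hxy)
  obtain ⟨a, r, ha, har, hconj⟩ := exists_conjugator hxy
  have htransport (m : ℕ) : 1 ≤ (cyclingProd m x)⁻¹ * (a * cyclingProd m y) ∧
      (cyclingProd m x)⁻¹ * (a * cyclingProd m y) ≤ Δ ^ r := by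
    induction m with
    | zero => simpa [cyclingProd] using ⟨ha, har⟩
    | succ m ih =>
      have hstep := one_le_transport_and_transport_le (x := cycling^[m] x) (y := cycling^[m] y)
        (by rw [hx, hy, hinf]) ih.1 ih.2
        (by rw [cycling_iterate, cycling_iterate, ← hconj]; group)
      rw [cyclingProd_succ, cyclingProd_succ]
      convert hstep using 2 <;> group
  refine ⟨deg (Δ ^ r : G), fun m => ?_⟩
  have hle := deg_strictMono.monotone (htransport m).2
  have hpos := deg_strictMono.monotone ha
  rw [deg_one] at hpos
  rw [deg_mul, deg_mul, deg_inv] at hle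
  omega

theorem IsCyclingStable.inf_Δ_zpow_le_cyclingProd (hx : IsCyclingStable x) (i : ℕ) :
    x * Δ ^ (-infimum x) ⊓ Δ ^ (i : ℤ) ≤ cyclingProd i x := by
  induction i with
  | zero => simp [cyclingProd]
  | succ i ih =>
    rw [cyclingProd_succ, initialFactor, hx i, mul_inf]
    refine le_inf (inf_le_left.trans ?_) ?_
    · calc x * Δ ^ (-infimum x) ≤ x * cyclingProd i x * Δ ^ (-infimum x) :=
            (mul_Δ_zpow_le_mul_Δ_zpow _).2 (le_mul_of_one_le_right' (one_le_cyclingProd _ _))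
        _ = cyclingProd i x * (cycling^[i] x * Δ ^ (-infimum x)) := by
            rw [cycling_iterate]; group
    · calc x * Δ ^ (-infimum x) ⊓ Δ ^ ((i + 1 : ℕ) : ℤ)
          ≤ (x * Δ ^ (-infimum x) ⊓ Δ ^ (i : ℤ)) * Δ ^ (1 : ℤ) := by
            rw [inf_mul_Δ_zpow, ← zpow_add, Nat.cast_succ]
            exact inf_le_inf_right _ (le_mul_Δ_zpow _ zero_le_one)
        _ ≤ cyclingProd i x * Δ := by simpa using mul_Δ_le_mul_Δ.2 ih

theorem IsCyclingStable.mul_Δ_zpow_le_cyclingProd (hx : IsCyclingStable x)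
    (hk : supremum x ≤ infimum x + k) : x * Δ ^ (-infimum x) ≤ cyclingProd k x := by
  refine (le_inf le_rfl ?_).trans (hx.inf_Δ_zpow_le_cyclingProd k)
  rwa [mul_Δ_zpow_le_iff, neg_neg, ← zpow_add, ← supremum_le_iff, add_comm]

theorem IsCyclingStable.mul_deg_le_deg_cyclingProd (hx : IsCyclingStable x)
    (hk : supremum x ≤ infimum x + k) (j : ℕ) :
    j * deg (x * Δ ^ (-infimum x)) ≤ deg (cyclingProd (j * k) x) := by
  induction j generalizing x with
  | zero => simp [cyclingProd, deg_one]
  | succ j ih =>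
    have hfirst := deg_strictMono.monotone (hx.mul_Δ_zpow_le_cyclingProd hk)
    have hrest := ih (hx.iterate k) ((supremum_cycling_iterate_le k x).trans (by rwa [hx k]))
    rw [deg_mul, ← deg_eq_of_isConj (isConj_cycling_iterate k x), hx k, ← deg_mul] at hrest
    rw [Nat.succ_mul, add_comm (j * k), cyclingProd_add, deg_mul (cyclingProd k x)]
    push_cast
    linarith

theorem deg_cyclingProd_mul_of_isPeriodicPt {m : ℕ} (h : Function.IsPeriodicPt cycling m x)
    (N : ℕ) : deg (cyclingProd (N * m) x) = N * deg (cyclingProd m x) := by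
  induction N with
  | zero => simp [cyclingProd, deg_one]
  | succ N ih =>
    rw [Nat.succ_mul, add_comm (N * m), cyclingProd_add, deg_mul, h.eq, ih]
    push_cast
    ring

theorem cyclingProd_eq_of_deg_cyclingProd_le {C : ℤ} (hx : x ∈ Function.periodicPts cycling)
    (hk : supremum x ≤ infimum x + k)
    (hC : ∀ j : ℕ, deg (cyclingProd (j * k) x) ≤ j * deg (x * Δ ^ (-infimum x)) + C) :
    cyclingProd k x = x * Δ ^ (-infimum x) := by
  have hstable := isCyclingStable_of_mem_periodicPts hx
  refine (eq_of_le_of_deg_le (hstable.mul_Δ_zpow_le_cyclingProd hk) ?_).symm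
  obtain ⟨M, hM, hper⟩ := hx
  obtain ⟨M, rfl⟩ := Nat.exists_eq_add_of_lt hM
  have hmean : deg (cyclingProd ((0 + M + 1) * k) x) ≤
      (0 + M + 1 : ℕ) * deg (x * Δ ^ (-infimum x)) := by
    refine le_of_forall_nat_mul_le_mul_add (C := C) fun N => ?_
    rw [← deg_cyclingProd_mul_of_isPeriodicPt (hper.mul_const k), ← mul_assoc]
    exact_mod_cast (hC (N * (0 + M + 1))).trans (by push_cast; linarith)
  have hrest := (hstable.iterate k).mul_deg_le_deg_cyclingProd (k := k)
    ((supremum_cycling_iterate_le k x).trans (by rwa [hstable k])) M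
  rw [deg_mul, ← deg_eq_of_isConj (isConj_cycling_iterate k x), hstable k, ← deg_mul] at hrest
  rw [Nat.zero_add, Nat.succ_mul, add_comm (M * k), cyclingProd_add,
    deg_mul (cyclingProd k x)] at hmean
  push_cast at hmean
  linarith

theorem IsCyclingStable.cyclingProd_eq_inf (hx : IsCyclingStable x)
    (h : cyclingProd (k + 1) x = x * Δ ^ (-infimum x)) :
    cyclingProd k x = x * Δ ^ (-infimum x) ⊓ Δ ^ (k : ℤ) :=
  le_antisymm (le_inf (h ▸ cyclingProd_mono k.le_succ x) (cyclingProd_le_Δ_zpow k x))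
    (hx.inf_Δ_zpow_le_cyclingProd k)

theorem decycling_cycling (hx : IsCyclingStable x)
    (hsup : supremum (cycling x) = infimum x + k + 1)
    (h : cyclingProd (k + 1) x = x * Δ ^ (-infimum x))
    (h' : cyclingProd (k + 1) (cycling x) = cycling x * Δ ^ (-infimum x)) :
    decycling (cycling x) = x := by
  have hinf : infimum (cycling x) = infimum x := hx 1
  have hprod : cyclingProd k (cycling x) = (initialFactor x)⁻¹ * (x * Δ ^ (-infimum x)) := by
    rw [← h, cyclingProd, inv_mul_cancel_left]
  have hstem : stem (cycling x) = (initialFactor x)⁻¹ * x := by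
    have hinf_eq := (hx.iterate 1).cyclingProd_eq_inf (k := k) (by
      rwa [Function.iterate_one, hinf])
    rw [Function.iterate_one, hinf, hprod] at hinf_eq
    calc stem (cycling x)
        = (cycling x * Δ ^ (-infimum x) ⊓ Δ ^ (k : ℤ)) * Δ ^ infimum x := by
          rw [inf_mul_Δ_zpow, mul_assoc, ← zpow_add, neg_add_cancel, zpow_zero, mul_one,
            ← zpow_add, stem, hsup, add_sub_cancel_right, add_comm (k : ℤ)]
      _ = (initialFactor x)⁻¹ * x := by rw [← hinf_eq]; group
  have hfinal : finalFactor (cycling x) = initialFactor x := by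
    rw [finalFactor, hstem, cycling]
    group
  rw [decycling, hfinal, cycling]
  group

end IteratedCycling

section Rigid

variable {G : Type*} [Group G] [SemilatticeInf G] [MulLeftMono G] [GarsideGroup G]
  {a x y : G} {L : List G} {u : ℤ}

/-- Rigid elements, also called cyclically weighted: moving the initial factor to the end keeps
the normal form left weighted. -/
def IsRigid (x : G) : Prop := LeftWeighted (finalFactor x) (initialFactor x)

/-- A normal form `Δ ^ u * y₁ ⋯ yₖ` which stays left weighted when the initial factor
`Δ ^ u * y₁ * Δ ^ (-u)` is appended to it. -/
structure IsRigidForm (u : ℤ) (L : List G) (x : G) : Prop extends IsNormalForm u L x where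
  isChain_append : ∀ a ∈ L.head?, (L ++ [twist u a]).IsChain LeftWeighted

theorem IsRigid.exists_isRigidForm (h : IsRigid x) : ∃ u L, IsRigidForm u L x := by
  obtain ⟨u, L, hL⟩ := exists_isNormalForm x
  refine ⟨u, L, hL, fun a ha => List.isChain_append.2 ⟨hL.isChain, by simp, ?_⟩⟩
  rintro b hb c hc
  obtain rfl : twist u a = c := by simpa using hc
  obtain ⟨L', rfl⟩ : ∃ L', L = L' ++ [b] := List.getLast?_eq_some_iff.1 hb
  rw [IsRigid, hL.finalFactor_eq, hL.initialFactor_eq, List.headD_eq_head?_getD, ha] at h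
  exact h

namespace IsRigidForm

theorem cycling (h : IsRigidForm u (a :: L) x) :
    initialFactor x = twist u a ∧ IsRigidForm u (L ++ [twist u a]) (cycling x) := by
  have hι : initialFactor x = twist u a := h.initialFactor_eq
  have hchain : (a :: (L ++ [twist u a])).IsChain LeftWeighted := h.isChain_append a rfl
  have hmem := List.forall_mem_cons.1 h.mem_Ioo
  refine ⟨hι, ⟨?_, hchain.tail, ?_⟩, fun b hb => ?_⟩
  · rw [List.forall_mem_append, List.forall_mem_singleton]
    exact ⟨hmem.2, twist_mem_Ioo u hmem.1⟩
  · rw [GarsideGroup.cycling, hι, h.eq, List.prod_cons, List.prod_append, List.prod_singleton,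
      twist_apply]
    group
  · refine List.isChain_append.2 ⟨hchain.tail, by simp, fun c hc d hd => ?_⟩
    obtain rfl : twist u a = c := by simpa using hc
    obtain rfl : twist u b = d := by simpa using hd
    exact ((List.isChain_cons.1 hchain).1 b hb).map_twist u

theorem cycling_iterate {A B : List G} (h : IsRigidForm u (A ++ B) x) :
    cyclingProd A.length x = twist u A.prod ∧
      IsRigidForm u (B ++ A.map (twist u)) (GarsideGroup.cycling^[A.length] x) := by
  induction A generalizing x B with
  | nil => simpa [cyclingProd] using h
  | cons a A ih =>
    rw [List.cons_append] at h
    obtain ⟨hι, hcyc⟩ := h.cycling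
    rw [List.append_assoc] at hcyc
    obtain ⟨hprod, hiter⟩ := ih hcyc
    refine ⟨?_, by simpa using hiter⟩
    rw [List.length_cons, cyclingProd, hprod, hι, List.prod_cons, map_mul]

theorem isCyclingStable (h : IsRigidForm u L x) : IsCyclingStable x := by
  intro i
  rw [h.infimum_eq]
  induction i generalizing x L with
  | zero => exact h.infimum_eq
  | succ i ih =>
    rw [Function.iterate_succ_apply]
    cases L with
    | nil =>
      rw [cycling_eq_self_of_infimum_eq_supremum (by simp [h.infimum_eq, h.supremum_eq])]
      exact ih h
    | cons a L => exact ih h.cycling.2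

theorem deg_cyclingProd (h : IsRigidForm u L x) (j : ℕ) :
    deg (cyclingProd (j * L.length) x) = j * deg (x * Δ ^ (-u)) := by
  induction j generalizing x L with
  | zero => simp [cyclingProd, deg_one]
  | succ j ih =>
    obtain ⟨hprod, hiter⟩ := cycling_iterate (A := L) (B := []) (by simpa using h)
    have hrest := ih hiter
    rw [List.nil_append, List.length_map, deg_mul,
      ← deg_eq_of_isConj (isConj_cycling_iterate L.length x), ← deg_mul] at hrest
    rw [Nat.succ_mul, add_comm (j * _), cyclingProd_add, deg_mul (cyclingProd L.length x), hrest,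
      hprod, twist_apply, ← h.eq]
    push_cast
    ring

end IsRigidForm

theorem IsRigid.cyclingProd_eq {k : ℕ} (hx : IsRigid x) (hxy : IsConj x y)
    (hy : y ∈ Function.periodicPts cycling) (hsup : supremum y ≤ supremum x)
    (hk : supremum y = infimum y + k) : cyclingProd k y = y * Δ ^ (-infimum y) := by
  obtain ⟨u, L, hL⟩ := hx.exists_isRigidForm
  have hystable := isCyclingStable_of_mem_periodicPts hy
  obtain ⟨C, hC⟩ := exists_deg_cyclingProd_le_add hL.isCyclingStable hystable hxy
  have hinf : infimum y = u := by
    rw [← hL.infimum_eq]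
    exact le_antisymm (hL.isCyclingStable.infimum_le_of_isConj hxy)
      (hystable.infimum_le_of_isConj hxy.symm)
  have hkL : k ≤ L.length := by
    rw [hL.supremum_eq] at hsup
    omega
  refine cyclingProd_eq_of_deg_cyclingProd_le (C := C) hy hk.le fun j => ?_
  calc deg (cyclingProd (j * k) y) ≤ deg (cyclingProd (j * L.length) y) :=
        deg_strictMono.monotone (cyclingProd_mono (Nat.mul_le_mul_left j hkL) y)
    _ ≤ deg (cyclingProd (j * L.length) x) + C := hC _
    _ = j * deg (y * Δ ^ (-infimum y)) + C := by
        rw [hL.deg_cyclingProd, hinf, deg_mul, deg_mul, deg_eq_of_isConj hxy]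

theorem decycling_eq_self_of_infimum_eq_supremum (h : infimum x = supremum x) :
    decycling x = x := by
  have hx := eq_Δ_zpow_of_infimum_eq_supremum h
  have hstem : stem x = Δ ^ (infimum x - 1) := by
    rw [stem, ← h, inf_eq_right]
    exact (Δ_zpow_le_Δ_zpow.2 (by omega)).trans hx.ge
  rw [decycling_eq, finalFactor, hstem, mul_assoc, inv_mul_eq_iff_eq_mul]
  generalize infimum x = k at hx
  rw [hx, ← zpow_add, ← zpow_add, add_comm]

theorem IsRigid.decycling_cycling (hx : IsRigid x) (hxy : IsConj x y)
    (hy : y ∈ Function.periodicPts cycling) (hsup : supremum y ≤ supremum x) :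
    decycling (cycling y) = y := by
  rcases (infimum_le_supremum y).eq_or_lt with hys | hys
  · rw [cycling_eq_self_of_infimum_eq_supremum hys, decycling_eq_self_of_infimum_eq_supremum hys]
  obtain ⟨k, hk⟩ : ∃ k : ℕ, supremum y = infimum y + k + 1 :=
    ⟨(supremum y - infimum y - 1).toNat, by omega⟩
  have hinfc : infimum (cycling y) = infimum y :=
    iterate_const_of_mem_periodicPts infimum_le_cycling hy 1
  have hsupc : supremum (cycling y) = supremum y :=
    iterate_const_of_mem_periodicPts (φ := fun x => OrderDual.toDual (supremum x))
      supremum_cycling_le hy 1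
  refine GarsideGroup.decycling_cycling (k := k) (isCyclingStable_of_mem_periodicPts hy)
    (hsupc.trans hk) (hx.cyclingProd_eq hxy hy hsup (by push_cast; omega)) ?_
  rw [← hinfc]
  refine hx.cyclingProd_eq (hxy.trans (isConj_cycling_iterate 1 y)) ?_ (hsupc.trans_le hsup) ?_
  · obtain ⟨M, hM, hper⟩ := hy
    exact ⟨M, hM, hper.apply⟩
  · rw [hsupc, hinfc, hk]
    push_cast
    ring

theorem IsRigid.ultraSummitSet_subset_reducedSuperSummitSet (hx : IsRigid x) :
    ultraSummitSet x ⊆ reducedSuperSummitSet x := by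
  rintro y ⟨⟨⟨hxy, -⟩, hsup⟩, hy⟩
  refine ⟨hxy, hy, mem_periodicPts_of_leftInverse_on_orbit (fun i => ?_) hy⟩
  refine hx.decycling_cycling (hxy.trans (isConj_cycling_iterate i y)) ?_ ?_
  · obtain ⟨M, hM, hper⟩ := hy
    exact ⟨M, hM, hper.apply_iterate i⟩
  · exact (supremum_cycling_iterate_le i y).trans (hsup x (IsConj.refl x))

end Rigid

theorem invariant_sets_chain_general {G : Type*} [Group G] [SemilatticeInf G] [MulLeftMono G]
    [GarsideGroup G] (x : G) :
    reducedSuperSummitSet x ⊆ ultraSummitSet x ∧ ultraSummitSet x ⊆ superSummitSet x ∧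
      superSummitSet x ⊆ summitSet x ∧
      (IsRigid x → reducedSuperSummitSet x = ultraSummitSet x) :=
  ⟨reducedSuperSummitSet_subset_ultraSummitSet x, ultraSummitSet_subset_superSummitSet x,
    superSummitSet_subset_summitSet x, fun hx =>
      (reducedSuperSummitSet_subset_ultraSummitSet x).antisymm
        hx.ultraSummitSet_subset_reducedSuperSummitSet⟩

end GarsideGroup

theorem exists_forall_le_iff_of_one_le {G : Type*} [Group G] [PartialOrder G] [MulLeftMono G]
    [IsCodirectedOrder G]
    (h : ∀ a b : G, 1 ≤ a → 1 ≤ b → ∃ d, 1 ≤ d ∧ ∀ c, 1 ≤ c → (c ≤ d ↔ c ≤ a ∧ c ≤ b)) (a b : G) :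
    ∃ d, ∀ c, c ≤ d ↔ c ≤ a ∧ c ≤ b := by
  have key (w : G) (ha : w ≤ a) (hb : w ≤ b) :
      ∃ d, w ≤ d ∧ ∀ c, w ≤ c → (c ≤ d ↔ c ≤ a ∧ c ≤ b) := by
    obtain ⟨d, hd, hglb⟩ := h (w⁻¹ * a) (w⁻¹ * b) (by simpa) (by simpa)
    refine ⟨w * d, le_mul_of_one_le_right' hd, fun c hc => ?_⟩
    simpa [inv_mul_le_iff_le_mul] using hglb (w⁻¹ * c) (by simpa)
  obtain ⟨w, ha, hb⟩ := exists_le_le a b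
  obtain ⟨d, hwd, hd⟩ := key w ha hb
  refine ⟨d, fun c => ⟨fun hc => ?_, fun hc => ?_⟩⟩
  · exact ((hd d hwd).1 le_rfl).imp hc.trans hc.trans
  · obtain ⟨v, hvw, hvc⟩ := exists_le_le w c
    obtain ⟨e, -, he⟩ := key v (hvw.trans ha) (hvw.trans hb)
    have hwe : w ≤ e := (he w hvw).2 ⟨ha, hb⟩
    exact ((he c hvc).2 hc).trans ((hd e hwe).2 ((he e (hvw.trans hwe)).1 le_rfl))

namespace BraidGroup

variable {n : ℕ}

section Order

instance : PartialOrder (BraidGroup n) where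
  le := LeftDvd
  le_refl x := ⟨1, one_mem (positives n), mul_one x⟩
  le_trans := by
    rintro x _ _ ⟨p, hp, rfl⟩ ⟨q, hq, rfl⟩
    exact ⟨p * q, mul_mem (S := Submonoid (BraidGroup n)) hp hq, (mul_assoc x p q).symm⟩
  le_antisymm := by
    rintro x _ ⟨p, hp, rfl⟩ ⟨q, hq, hpq⟩
    rw [mul_assoc, mul_eq_left] at hpq
    by_contra hne
    have hp1 : p ≠ 1 := fun h => hne (by rw [h, mul_one])
    have hq1 : q ≠ 1 := fun h => hp1 (by rwa [h, mul_one] at hpq)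
    have hsum := expSum_mul p q
    rw [hpq, expSum_one] at hsum
    linarith [hp.expSum_pos hp1, hq.expSum_pos hq1]

theorem one_le_iff_isPositive {x : BraidGroup n} : 1 ≤ x ↔ IsPositive x :=
  ⟨fun ⟨p, hp, h⟩ => by rwa [← h, one_mul], fun h => ⟨x, h, one_mul x⟩⟩

instance : MulLeftMono (BraidGroup n) where
  elim := by
    rintro a b _ ⟨p, hp, rfl⟩
    exact ⟨p, hp, mul_assoc a b p⟩

theorem expSum_pos {x : BraidGroup n} (h : 1 < x) : 0 < expSum x :=
  (one_le_iff_isPositive.1 h.le).expSum_pos h.ne'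

theorem one_lt_σ (i : Fin (n - 1)) : 1 < σ (n := n) i := by
  refine (one_le_iff_isPositive.2 (Submonoid.subset_closure ⟨i, rfl⟩)).lt_of_ne fun h => ?_
  have := expSum_σ i
  rw [← h, expSum_one] at this
  omega

theorem exists_σ_le {x : BraidGroup n} (h : 1 < x) : ∃ i : Fin (n - 1), σ i ≤ x := by
  obtain ⟨y, rfl⟩ := isPositive_iff_exists_ofMonoid.1 (one_le_iff_isPositive.1 h.le)
  cases y using ArtinMonoid.induction_on with
  | one => exact absurd (map_one _) h.ne'
  | s_mul i y =>
    rw [map_mul, ofMonoid_s]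
    exact ⟨i, le_mul_of_one_le_right' <|
      one_le_iff_isPositive.2 (isPositive_iff_exists_ofMonoid.2 ⟨y, rfl⟩)⟩

theorem σ_le_Δ (i : Fin (n - 1)) : σ i ≤ Δ n := by
  obtain ⟨y, hy⟩ := (ArtinMonoid.isArtinFamily_s (SimpleGraph.pathGraph (n - 1))).dvd_halfTwist i
  refine ⟨ofMonoid n y, isPositive_iff_exists_ofMonoid.2 ⟨y, rfl⟩, ?_⟩
  rw [← ofMonoid_delta, ← ofMonoid_s, ← map_mul, BraidMonoid.delta, hy]

theorem one_le_Δ (n : ℕ) : 1 ≤ Δ n :=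
  one_le_iff_isPositive.2 (isPositive_iff_exists_ofMonoid.2 ⟨_, ofMonoid_delta⟩)

theorem exists_Δ_zpow_le (x : BraidGroup n) : ∃ k : ℤ, Δ n ^ k ≤ x := by
  obtain ⟨k, hk⟩ := exists_isPositive_Δ_sq_zpow_mul x
  refine ⟨-(2 * k), ?_⟩
  rwa [← one_le_iff_isPositive, ← inv_le_iff_one_le_mul', ← zpow_natCast, ← zpow_mul,
    ← zpow_neg] at hk

instance : IsCodirectedOrder (BraidGroup n) where
  directed x y := by
    obtain ⟨k, hk⟩ := exists_Δ_zpow_le x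
    obtain ⟨l, hl⟩ := exists_Δ_zpow_le y
    have hmono : Monotone fun k : ℤ => Δ n ^ k := monotone_int_of_le_succ fun k => by
      rw [zpow_add_one]
      exact le_mul_of_one_le_right' (one_le_Δ n)
    exact ⟨Δ n ^ min k l, (hmono (min_le_left k l)).trans hk, (hmono (min_le_right k l)).trans hl⟩

theorem exists_forall_le_iff (a b : BraidGroup n) : ∃ d, ∀ c, c ≤ d ↔ c ≤ a ∧ c ≤ b := by
  refine exists_forall_le_iff_of_one_le (fun a b ha hb => ?_) a b
  simp only [one_le_iff_isPositive] at ha hb ⊢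
  exact ha.exists_gcd hb

noncomputable instance : SemilatticeInf (BraidGroup n) where
  inf a b := (exists_forall_le_iff a b).choose
  inf_le_left a b := (((exists_forall_le_iff a b).choose_spec _).1 le_rfl).1
  inf_le_right a b := (((exists_forall_le_iff a b).choose_spec _).1 le_rfl).2
  le_inf a b c hb hc := ((exists_forall_le_iff b c).choose_spec a).2 ⟨hb, hc⟩

end Order

section Garside

theorem conj_Δ_σ (i : Fin (n - 1)) : Δ n * σ i * (Δ n)⁻¹ = σ i.rev := by
  rw [Δ_mul_σ, mul_inv_cancel_right]

theorem IsPositive.conj_Δ {x : BraidGroup n} (hx : IsPositive x) :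
    IsPositive (Δ n * x * (Δ n)⁻¹) := by
  rw [← MulAut.conj_apply]
  refine (Submonoid.closure_le (S := (positives n).comap (MulAut.conj (Δ n)))).2 ?_ hx
  rintro _ ⟨i, rfl⟩
  rw [SetLike.mem_coe, Submonoid.mem_comap, MulAut.conj_apply, conj_Δ_σ]
  exact Submonoid.subset_closure ⟨i.rev, rfl⟩

theorem mul_Δ_le_mul_Δ {a b : BraidGroup n} : a * Δ n ≤ b * Δ n ↔ a ≤ b := by
  have hconj : Δ n * (a⁻¹ * b) * (Δ n)⁻¹ = (a * Δ n)⁻¹ * (b * Δ n) := by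
    have := (commute_Δ_sq (a⁻¹ * b)).eq
    rw [mul_inv_eq_iff_eq_mul, mul_inv_rev, mul_assoc, mul_assoc _ a⁻¹, eq_inv_mul_iff_mul_eq,
      ← mul_assoc, ← sq, this, sq]
    simp only [mul_assoc]
  rw [← le_inv_mul_iff_le, ← le_inv_mul_iff_le (b := a), one_le_iff_isPositive,
    one_le_iff_isPositive]
  constructor
  · intro h
    simpa [mul_assoc] using h.conj_Δ
  · intro h
    rw [← hconj]
    exact h.conj_Δ

noncomputable instance [n.AtLeastTwo] : GarsideGroup (BraidGroup n) where
  Δ := Δ n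
  one_lt_Δ :=
    have hn : 0 < n - 1 := Nat.sub_pos_of_lt Nat.AtLeastTwo.prop
    (one_lt_σ ⟨0, hn⟩).trans_le (σ_le_Δ _)
  mul_Δ_le_mul_Δ := mul_Δ_le_mul_Δ
  exists_Δ_zpow_le := exists_Δ_zpow_le
  exists_commute_Δ_pow := ⟨2, two_pos, commute_Δ_sq⟩
  deg := expSum
  deg_mul := expSum_mul
  deg_pos := expSum_pos

theorem τ_apply (x : BraidGroup n) : τ n x = Δ n * x * (Δ n)⁻¹ := by
  have hτ (i : Fin (n - 1)) : τ n (σ i) = σ i.rev :=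
    Classical.epsilon_spec (p := fun f : BraidGroup n →* BraidGroup n => ∀ i, f (σ i) = σ i.rev)
      ⟨(MulAut.conj (Δ n)).toMonoidHom, conj_Δ_σ⟩ i
  have heq : τ n = (MulAut.conj (Δ n)).toMonoidHom :=
    PresentedGroup.ext fun i => (hτ i).trans (conj_Δ_σ i).symm
  rw [heq]
  rfl

open GarsideGroup (twist LeftWeighted IsNormalForm IsRigid infimum supremum initialFactor
  finalFactor cycling decycling summitSet superSummitSet ultraSummitSet reducedSuperSummitSet)

variable [n.AtLeastTwo]

theorem Δ_eq : Δ n = (GarsideGroup.Δ : BraidGroup n) := rfl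

theorem τpow_eq_twist (u : ℤ) (x : BraidGroup n) : τpow u x = twist u x := by
  have hconj (k : ℤ) (y : BraidGroup n) : Δ n ^ (2 * k) * y * Δ n ^ (-(2 * k)) = y := by
    rw [zpow_neg, zpow_mul, mul_inv_eq_iff_eq_mul]
    exact ((commute_Δ_sq y).zpow_left k).eq
  rw [GarsideGroup.twist_apply, ← Δ_eq]
  rcases u.even_or_odd' with ⟨k, rfl | rfl⟩
  · rw [τpow, if_pos (even_two_mul k), hconj]
  · rw [τpow, if_neg (Int.not_even_two_mul_add_one k), τ_apply, ← hconj k (Δ n * x * (Δ n)⁻¹)]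
    group

theorem isLeftWeighted_iff {a b : BraidGroup n} (ha : a ≤ Δ n) (hb : 1 ≤ b) :
    IsLeftWeighted a b ↔ LeftWeighted a b := by
  have hone : 1 ≤ a⁻¹ * Δ n ⊓ b := le_inf (le_inv_mul_iff_le.2 ha) hb
  rw [GarsideGroup.leftWeighted_iff_inf_eq_one, ← Δ_eq]
  constructor
  · intro h
    by_contra hne
    obtain ⟨i, hi⟩ := exists_σ_le (hone.lt_of_ne' hne)
    exact h i (le_inf_iff.1 hi)
  · intro h i hi
    exact (one_lt_σ i).not_ge (h ▸ le_inf hi.1 hi.2)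

theorem isPermBraid_and_ne_iff {a : BraidGroup n} :
    IsPermBraid a ∧ a ≠ 1 ∧ a ≠ Δ n ↔ a ∈ Set.Ioo 1 (GarsideGroup.Δ : BraidGroup n) := by
  rw [IsPermBraid, ← one_le_iff_isPositive, and_and_and_comm, Set.mem_Ioo, lt_iff_le_and_ne,
    lt_iff_le_and_ne, ne_comm (a := a) (b := 1)]
  rfl

theorem isWeightedForm_iff {u : ℤ} {L : List (BraidGroup n)} {x : BraidGroup n} :
    IsWeightedForm u L x ↔ IsNormalForm u L x := by
  have hmem : (∀ a ∈ L, IsPermBraid a ∧ a ≠ 1 ∧ a ≠ Δ n) ↔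
      ∀ a ∈ L, a ∈ Set.Ioo 1 (GarsideGroup.Δ : BraidGroup n) :=
    forall₂_congr fun a _ => isPermBraid_and_ne_iff
  have hchain (h : ∀ a ∈ L, a ∈ Set.Ioo 1 (GarsideGroup.Δ : BraidGroup n)) :
      L.IsChain IsLeftWeighted ↔ L.IsChain LeftWeighted :=
    List.IsChain.iff_of_mem_imp fun a b ha hb => isLeftWeighted_iff (h a ha).2.le (h b hb).1.le
  constructor
  · rintro ⟨h, hL, hx⟩
    exact ⟨hmem.1 h, (hchain (hmem.1 h)).1 hL, hx⟩
  · rintro ⟨h, hL, hx⟩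
    exact ⟨hmem.2 h, (hchain h).2 hL, hx⟩

theorem isNormalForm_wf (x : BraidGroup n) : IsNormalForm (wf x).1 (wf x).2 x := by
  rw [← isWeightedForm_iff]
  obtain ⟨u, L, h⟩ := GarsideGroup.exists_isNormalForm x
  exact Classical.epsilon_spec (p := fun p : ℤ × List _ => IsWeightedForm p.1 p.2 x)
    ⟨(u, L), isWeightedForm_iff.2 h⟩

theorem binf_eq_infimum (x : BraidGroup n) : binf x = infimum x :=
  (isNormalForm_wf x).infimum_eq.symm

theorem bsup_eq_supremum (x : BraidGroup n) : bsup x = supremum x :=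
  (isNormalForm_wf x).supremum_eq.symm

theorem τpow_bhead_eq_initialFactor (x : BraidGroup n) :
    τpow (binf x) (bhead x) = initialFactor x := by
  rw [τpow_eq_twist, (isNormalForm_wf x).initialFactor_eq, List.headD_eq_head?_getD]
  rfl

theorem btail_eq_finalFactor {x : BraidGroup n} (h : infimum x ≠ supremum x) :
    btail x = finalFactor x := by
  have hwf := isNormalForm_wf x
  rw [btail]
  rcases (wf x).2.eq_nil_or_concat' with hL | ⟨L, b, hL⟩
  · simp [hwf.infimum_eq, hwf.supremum_eq, hL] at h
  · rw [hL] at hwf ⊢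
    simp [hwf.finalFactor_eq]

theorem btail_eq_one {x : BraidGroup n} (h : infimum x = supremum x) : btail x = 1 := by
  have hwf := isNormalForm_wf x
  have hL : (wf x).2 = [] := by
    simpa [hwf.infimum_eq, hwf.supremum_eq] using h
  rw [btail, hL]
  rfl

theorem cyc_eq_cycling (x : BraidGroup n) : cyc x = cycling x := by
  rw [cyc, τpow_bhead_eq_initialFactor, cycling]

theorem decyc_eq_decycling (x : BraidGroup n) : decyc x = decycling x := by
  by_cases h : infimum x = supremum x
  · rw [GarsideGroup.decycling_eq_self_of_infimum_eq_supremum h, decyc, btail_eq_one h]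
    simp
  · rw [decyc, btail_eq_finalFactor h, decycling]

theorem isRigid_of_isCW {x : BraidGroup n} (h : IsCW x) : IsRigid x := by
  by_cases hx : infimum x = supremum x
  · rw [IsRigid, GarsideGroup.initialFactor_eq_one_of_infimum_eq_supremum hx, LeftWeighted, mul_one]
    exact inf_eq_left.2 (GarsideGroup.finalFactor_le_Δ x)
  · rw [IsCW, btail_eq_finalFactor hx, τpow_bhead_eq_initialFactor] at h
    exact (isLeftWeighted_iff (GarsideGroup.finalFactor_le_Δ x)
      (GarsideGroup.one_le_initialFactor x)).1 h

theorem SS_eq_summitSet (x : BraidGroup n) : SS x = summitSet x := by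
  simp only [SS, summitSet, binf_eq_infimum]

theorem SSS_eq_superSummitSet (x : BraidGroup n) : SSS x = superSummitSet x := by
  simp only [SSS, superSummitSet, SS_eq_summitSet, bsup_eq_supremum]

theorem USS_eq_ultraSummitSet (x : BraidGroup n) : USS x = ultraSummitSet x := by
  rw [USS, SSS_eq_superSummitSet, funext cyc_eq_cycling]
  rfl

theorem RSSS_eq_reducedSuperSummitSet (x : BraidGroup n) : RSSS x = reducedSuperSummitSet x := by
  rw [RSSS, funext cyc_eq_cycling, funext decyc_eq_decycling]
  rfl

end Garside

theorem subsingleton_of_lt_two (hn : n < 2) : Subsingleton (BraidGroup n) :=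
  have : IsEmpty (Fin (n - 1)) := ⟨fun i => by have := i.isLt; omega⟩
  (PresentedGroup.mk_surjective (braidRels n)).subsingleton

theorem mem_USS_of_subsingleton [Subsingleton (BraidGroup n)] (x y : BraidGroup n) : y ∈ USS x := by
  obtain rfl := Subsingleton.elim x y
  have heq (z : BraidGroup n) : z = x := Subsingleton.elim z x
  exact ⟨⟨⟨IsConj.refl x, fun z _ => by rw [heq z]⟩, fun z _ => by rw [heq z]⟩, 1, one_pos, heq _⟩

theorem mem_RSSS_of_subsingleton [Subsingleton (BraidGroup n)] (x y : BraidGroup n) :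
    y ∈ RSSS x := by
  obtain rfl := Subsingleton.elim x y
  exact ⟨IsConj.refl x, ⟨1, one_pos, Subsingleton.elim _ _⟩, 1, one_pos, Subsingleton.elim _ _⟩

/-- `RSSS(x) ⊆ USS(x) ⊆ SSS(x) ⊆ SS(x)`, with `RSSS(x) = USS(x)`
when `x` is cyclically weighted. -/
theorem invariant_sets_chain (n : ℕ) (x : BraidGroup n) :
    RSSS x ⊆ USS x ∧ USS x ⊆ SSS x ∧ SSS x ⊆ SS x ∧
      (IsCW x → RSSS x = USS x) := by
  rcases lt_or_ge n 2 with hn | hn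
  · have := subsingleton_of_lt_two hn
    exact ⟨fun y _ => mem_USS_of_subsingleton x y, fun _ hy => hy.1, fun _ hy => hy.1, fun _ =>
      Set.ext fun y => iff_of_true (mem_RSSS_of_subsingleton x y) (mem_USS_of_subsingleton x y)⟩
  · have : n.AtLeastTwo := ⟨hn⟩
    rw [RSSS_eq_reducedSuperSummitSet, USS_eq_ultraSummitSet, SSS_eq_superSummitSet,
      SS_eq_summitSet]
    obtain ⟨h₁, h₂, h₃, h₄⟩ := GarsideGroup.invariant_sets_chain_general x
    exact ⟨h₁, h₂, h₃, fun hx => h₄ (isRigid_of_isCW hx)⟩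

end BraidGroup
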